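/- arXiv:1906.09131 — 3 statements merged into one kernel-verified Lean document; each statement's English description precedes it below -/
import Mathlib

section
/- The satisfiability problem for FL²3T, the two-variable fluted fragment with three distinguished transitive relations, is undecidable: there is no algorithm that, given a sentence of FL²3T, decides whether it has a model in which all three distinguished binary relations are transitive. -/
/- STATEMENT 12: The satisfiability problem for FL²3T, the two-variable fluted
fragment (without equality) with three distinguished transitive relations, is
undecidable. -/

namespace FlutedThreeTrans

/-- FL² formulas over countably many unary predicates (indexed by `ℕ`) and three
distinguished binary predicates (indexed by `Fin 3`); the index `m ≤ 2` records that
the free variables form a suffix of `x₁, …, x_m`, all atoms ending at the last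
variable, and only the last variable may be quantified. -/
inductive F : ℕ → Type
  | patom (p : ℕ) {m : ℕ} (h1 : 1 ≤ m) (h2 : m ≤ 2) : F m
  | batom (k : Fin 3) : F 2
  | fls {m : ℕ} (h : m ≤ 2) : F m
  | not {m : ℕ} (φ : F m) : F m
  | and {m : ℕ} (φ ψ : F m) : F m
  | or {m : ℕ} (φ ψ : F m) : F m
  | imp {m : ℕ} (φ ψ : F m) : F m
  | ex {m : ℕ} (h : m ≤ 1) (φ : F (m + 1)) : F m
  | all {m : ℕ} (h : m ≤ 1) (φ : F (m + 1)) : F m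

/-- A structure interpreting the unary predicates and the three distinguished binary
predicates. -/
structure Str (A : Type) where
  U : ℕ → A → Prop
  T : Fin 3 → A → A → Prop

def Sat {A : Type} (M : Str A) : ∀ {m : ℕ}, F m → (Fin m → A) → Prop
  | m, .patom p h1 _, v => M.U p (v ⟨m - 1, by omega⟩)
  | _, .batom k, v => M.T k (v 0) (v 1)
  | _, .fls _, _ => False
  | _, .not φ, v => ¬ Sat M φ v
  | _, .and φ ψ, v => Sat M φ v ∧ Sat M ψ v
  | _, .or φ ψ, v => Sat M φ v ∨ Sat M ψ v
  | _, .imp φ ψ, v => Sat M φ v → Sat M ψ v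
  | _, .ex _ φ, v => ∃ a : A, Sat M φ (Fin.snoc v a)
  | _, .all _ φ, v => ∀ a : A, Sat M φ (Fin.snoc v a)

/-- `φ` has a model in which all three distinguished binary relations are
transitive. -/
def Satisfiable (φ : F 0) : Prop :=
  ∃ (A : Type) (_ : Nonempty A) (M : Str A),
    (∀ k, Transitive (M.T k)) ∧ Sat M φ (fun i => i.elim0)

/-- A concrete Gödel numbering of FL²3T-formulas. -/
def encode : ∀ {m : ℕ}, F m → ℕ
  | _, .patom p _ _ => Nat.pair 0 p
  | _, .batom k => Nat.pair 1 k.val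
  | _, .fls _ => Nat.pair 2 0
  | _, .not φ => Nat.pair 3 (encode φ)
  | _, .and φ ψ => Nat.pair 4 (Nat.pair (encode φ) (encode ψ))
  | _, .or φ ψ => Nat.pair 5 (Nat.pair (encode φ) (encode ψ))
  | _, .imp φ ψ => Nat.pair 6 (Nat.pair (encode φ) (encode ψ))
  | _, .ex _ φ => Nat.pair 7 (encode φ)
  | _, .all _ φ => Nat.pair 8 (encode φ)

/-!
A run of a Turing machine that never halts is a tiling of the quadrant `ℕ × ℕ` by finitely many
tiles: row `j` is the configuration at time `j`, with the two-way tape folded at the head so that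
every constraint is local, and the bottom row spells the input. It remains to force a model to
contain a grid on which such a tiling lives.

Axioms of the form `∀ x, ∃ y` provide a bottom row and, above each of its elements, a column, but no
link between neighbouring columns. These links come from transitivity. Let `x` and `y` be in row `j`
of neighbouring columns, that of `x` being even, let `x'` and `y'` lie above them, and count rows
and indices of relations modulo 3. Suppose that `T j x y`. The step from `y` to `y'` is by `T j`, so
`T j x y'`, and an axiom excludes `T (j + 2) x y'` in this case. The step from `x` to `x'` is by
`T (j + 2)`, so `T (j + 2) x' y'` is impossible. Another axiom says that `T (j + 1) x' y'` or
`T (j + 2) x' y'`, hence `T (j + 1) x' y'`: the link has moved up by one row.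

Conversely, the quadrant carries such transitive relations, because every pair of points that are
not neighbours may satisfy the second alternative of the last axiom.
-/

section Divergence

theorem exists_seq_of_forall_exists_succ {α : Type*} {Q : ℕ → α → Prop} {R : ℕ → α → α → Prop}
    (step : ∀ n x, Q n x → ∃ y, Q (n + 1) y ∧ R n x y) {x₀ : α} (h₀ : Q 0 x₀) :
    ∃ s : ℕ → α, s 0 = x₀ ∧ (∀ n, Q n (s n)) ∧ ∀ n, R n (s n) (s (n + 1)) := by
  choose f hQ hR using step
  let s : ∀ n, {x // Q n x} := fun n => n.rec ⟨x₀, h₀⟩ fun n x => ⟨f n x x.2, hQ n x x.2⟩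
  exact ⟨fun n => (s n).1, rfl, fun n => (s n).2, fun n => hR n (s n).1 (s n).2⟩

theorem exists_eq_of_reaches {σ : Type*} {f : σ → Option σ} {r : ℕ → σ}
    (hr : ∀ t, f (r t) = some (r (t + 1))) {b : σ} (hb : StateTransition.Reaches f (r 0) b) :
    ∃ t, r t = b := by
  induction hb with
  | refl => exact ⟨0, rfl⟩
  | tail _ hbc ih =>
    obtain ⟨t, rfl⟩ := ih
    exact ⟨t + 1, Option.some.inj ((hr t).symm.trans hbc)⟩

theorem not_dom_eval_iff {σ : Type*} {f : σ → Option σ} {a : σ} :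
    ¬ (StateTransition.eval f a).Dom ↔
      ∃ r : ℕ → σ, r 0 = a ∧ ∀ t, f (r t) = some (r (t + 1)) := by
  constructor
  · intro hdom
    have step : ∀ _ : ℕ, ∀ b, StateTransition.Reaches f a b →
        ∃ c, StateTransition.Reaches f a c ∧ f b = some c := by
      intro _ b hb
      rcases hc : f b with _ | c
      · exact absurd (Part.dom_iff_mem.2 ⟨b, StateTransition.mem_eval.2 ⟨hb, hc⟩⟩) hdom
      · exact ⟨c, hb.tail hc, rfl⟩
    obtain ⟨r, h₀, -, hr⟩ := exists_seq_of_forall_exists_succ step Relation.ReflTransGen.refl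
    exact ⟨r, h₀, hr⟩
  · rintro ⟨r, rfl, hr⟩ hdom
    obtain ⟨b, hb⟩ := Part.dom_iff_mem.1 hdom
    obtain ⟨hreach, hhalt⟩ := StateTransition.mem_eval.1 hb
    obtain ⟨t, rfl⟩ := exists_eq_of_reaches hr hreach
    exact Option.some_ne_none _ ((hr t).symm.trans hhalt)

end Divergence

section HaltingAsTM0

open Turing

instance : Finite PartrecToTM2.K' :=
  Finite.of_surjective (α := Fin 4) ![.main, .rev, .aux, .stack] fun k => by
    cases k
    exacts [⟨0, rfl⟩, ⟨1, rfl⟩, ⟨2, rfl⟩, ⟨3, rfl⟩]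

instance : Finite (TM2to1.Γ' PartrecToTM2.K' fun _ => PartrecToTM2.Γ') :=
  inferInstanceAs (Finite (Bool × (PartrecToTM2.K' → Option PartrecToTM2.Γ')))

theorem elim_eq_update (L : List PartrecToTM2.Γ') :
    PartrecToTM2.K'.elim L [] [] [] = Function.update (fun _ => []) PartrecToTM2.K'.main L := by
  funext k
  cases k <;> rfl

theorem trNat_eq_cons_trNat_div2 {n : ℕ} (hn : n ≠ 0) :
    PartrecToTM2.trNat n = (if n.bodd then .bit1 else .bit0) :: PartrecToTM2.trNat n.div2 := by
  have hbit : (n : Num) = cond n.bodd Num.bit1 Num.bit0 (n.div2 : Num) := by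
    rw [← Num.ofNat'_eq, ← Num.ofNat'_eq, ← Num.ofNat'_bit, Nat.bit_bodd_div2]
  have hpos : (n : Num) ≠ 0 := Nat.cast_ne_zero.2 hn
  unfold PartrecToTM2.trNat
  rw [hbit] at hpos ⊢
  generalize n.bodd = b, (n.div2 : Num) = m at hpos ⊢
  rcases b with _ | _ <;> rcases m with _ | p
  exacts [absurd rfl hpos, rfl, rfl, rfl]

theorem primrec_of_eq_div2 {σ : Type*} [Primcodable σ] {f : ℕ → σ} {h : Bool → σ → σ}
    (hh : Primrec₂ h) (hf : ∀ n ≠ 0, f n = h n.bodd (f n.div2)) : Primrec f := by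
  refine Primrec.nat_omega_rec' f (m := id) (l := fun n => if n = 0 then [] else [n.div2])
    (g := fun n l => if n = 0 then some (f 0) else l.head?.map (h n.bodd)) .id
    (.ite (Primrec.eq.comp .id (.const 0)) (.const _)
      (Primrec.list_cons.comp Primrec.nat_div2 (.const _)))
    (.ite (Primrec.eq.comp .fst (.const 0)) (.const _)
      (Primrec.option_map (Primrec.list_head?.comp .snd)
        (hh.comp (Primrec.nat_bodd.comp (Primrec.fst.comp .fst)) .snd)))
    (fun n m hm => ?_) (fun n => ?_)
  · by_cases hn : n = 0
    · simp [hn] at hm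
    · obtain rfl : m = n.div2 := by simpa [hn] using hm
      simpa only [id, Nat.div2_val] using Nat.div_lt_self (by omega) one_lt_two
  · by_cases hn : n = 0
    · simp [hn]
    · simp [hn, ← hf n hn]

theorem primrec_trNat_map {β : Type*} [Primcodable β] (g : PartrecToTM2.Γ' → β) :
    Primrec fun n => (PartrecToTM2.trNat n).map g :=
  primrec_of_eq_div2
    (h := fun b l => (if b then g .bit1 else g .bit0) :: l)
    (Primrec.list_cons.comp (.ite (Primrec.eq.comp .fst (.const true)) (.const _) (.const _)) .snd)
    fun n hn => by rw [trNat_eq_cons_trNat_div2 hn, List.map_cons, apply_ite g]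

theorem primrec_trInit_map (g : TM2to1.Γ' PartrecToTM2.K' (fun _ => PartrecToTM2.Γ') → ℕ) :
    Primrec fun n : ℕ =>
      (TM2to1.trInit PartrecToTM2.K'.main (PartrecToTM2.trList [n])).map g := by
  let cell (bottom : Bool) (a : PartrecToTM2.Γ') :
      TM2to1.Γ' PartrecToTM2.K' fun _ => PartrecToTM2.Γ' :=
    (bottom, Function.update (fun _ => none) .main (some a))
  have hcells (n : ℕ) : TM2to1.trInit PartrecToTM2.K'.main (PartrecToTM2.trList [n]) =
      cell true .cons :: (PartrecToTM2.trNat n).reverse.map (cell false) := by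
    simp only [TM2to1.trInit, PartrecToTM2.trList, List.reverse_append, List.reverse_cons,
      List.reverse_nil, List.nil_append, List.singleton_append]
    rfl
  refine (Primrec.list_cons.comp (.const (g (cell true .cons)))
    (Primrec.list_reverse.comp (primrec_trNat_map (g ∘ cell false)))).of_eq fun n => ?_
  rw [hcells, List.map_cons, List.map_map, List.map_reverse]

theorem exists_TM0_of_partrec {f : ℕ →. ℕ} (hf : Partrec f) :
    ∃ (Γ Λ : Type) (_ : Inhabited Γ) (_ : Inhabited Λ) (_ : Finite Γ) (M : TM0.Machine Γ Λ)
      (S : Set Λ) (input : ℕ → List Γ), S.Finite ∧ TM0.Supports M S ∧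
      (∀ g : Γ → ℕ, Primrec fun n => (input n).map g) ∧
      ∀ n, (StateTransition.eval (TM0.step M) (TM0.init (input n))).Dom ↔ (f n).Dom := by
  obtain ⟨c, hc⟩ := ToPartrec.Code.exists_code (Nat.Partrec'.part_iff₁.2 hf)
  let _ : Inhabited PartrecToTM2.Λ' := ⟨PartrecToTM2.trNormal c .halt⟩
  have hS := TM1to0.tr_supports _
    (TM2to1.tr_supports PartrecToTM2.tr (PartrecToTM2.tr_supports c .halt))
  refine ⟨_, _, inferInstance, inferInstance, inferInstance, _, _,
    fun n => TM2to1.trInit PartrecToTM2.K'.main (PartrecToTM2.trList [n]),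
    Finset.finite_toSet _, hS, primrec_trInit_map, fun n => ?_⟩
  have hinit : PartrecToTM2.init c [n] =
      TM2.init PartrecToTM2.K'.main (PartrecToTM2.trList [n]) :=
    congrArg (TM2.Cfg.mk _ _) (elim_eq_update _)
  have hcode : c.eval [n] = pure <$> f n := hc ⟨[n], rfl⟩
  calc (TM0.eval _ _).Dom
    _ ↔ (TM1.eval (TM2to1.tr PartrecToTM2.tr) _).Dom := by rw [TM1to0.tr_eval]
    _ ↔ (TM2.eval PartrecToTM2.tr _ _).Dom := TM2to1.tr_eval_dom _ _ _
    _ ↔ (StateTransition.eval (TM2.step PartrecToTM2.tr) (PartrecToTM2.init c [n])).Dom := by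
      rw [hinit]; rfl
    _ ↔ (c.eval [n]).Dom := by rw [PartrecToTM2.tr_eval]; rfl
    _ ↔ (f n).Dom := by rw [hcode]; rfl

end HaltingAsTM0

section Tilings

/-- A tile system for the quadrant `ℕ × ℕ` with tiles `K`, whose bottom row reads a word over `G`:
`horiz` and `vert` say which tiles may be placed next to and above each other, `south` relates a
tile of the bottom row to the letter below it, and `corner` constrains the tile at the origin. -/
structure TileSystem (K G : Type*) where
  horiz : K → K → Prop
  vert : K → K → Prop
  south : K → G → Prop
  corner : K → Prop

namespace TileSystem

variable {K G : Type*}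

/-- `τ` is a tiling of the quadrant above the infinite word `w`; `τ i j` is the tile in column `i`
and row `j`. -/
structure IsTiling (𝒯 : TileSystem K G) (w : ℕ → G) (τ : ℕ → ℕ → K) : Prop where
  horiz : ∀ i j, 𝒯.horiz (τ i j) (τ (i + 1) j)
  vert : ∀ i j, 𝒯.vert (τ i j) (τ i (j + 1))
  south : ∀ i, 𝒯.south (τ i 0) (w i)
  corner : 𝒯.corner (τ 0 0)

/-- The tile system can tile the quadrant above the infinite word `w`. -/
def Tiles (𝒯 : TileSystem K G) (w : ℕ → G) : Prop :=
  ∃ τ, 𝒯.IsTiling w τ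

end TileSystem

end Tilings

section FoldedTape

open Turing

/-- The tile of a space-time diagram of a Turing machine whose two-way tape is folded at the head.
Column `i` carries the pair of cells at distance `i` to the right and to the left of the head
(`here`), the pairs of both neighbouring columns (`west`, `east`), the state, the symbol under the
head, and whether `i = 0` (`leftmost`). -/
@[ext]
structure FoldedTile (Γ : Type*) {Λ : Type*} (S : Set Λ) where
  state : S
  head : Γ
  leftmost : Bool
  west : Γ × Γ
  here : Γ × Γ
  east : Γ × Γ

theorem finite_foldedTile {Γ Λ : Type*} [Finite Γ] {S : Set Λ} (hS : S.Finite) :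
    Finite (FoldedTile Γ S) := by
  have := hS.to_subtype
  refine Finite.of_injective (β := S × Γ × Bool × (Γ × Γ) × (Γ × Γ) × (Γ × Γ))
    (fun t => (t.state, t.head, t.leftmost, t.west, t.here, t.east)) ?_
  rintro ⟨⟩ ⟨⟩ h
  simpa using h

variable {Γ Λ : Type*} [Inhabited Γ]

theorem nth_mk₁_natCast (l : List Γ) (i : ℕ) : (Tape.mk₁ l).nth i = l.getI i := by
  rw [Tape.mk₁, Tape.mk₂, Tape.mk'_nth_nat, ListBlank.nth_mk]

theorem nth_mk₁_neg_succ (l : List Γ) (i : ℕ) :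
    (Tape.mk₁ l).nth (-(i + 1 : ℕ)) = default := by
  change (ListBlank.mk ([] : List Γ)).nth i = default
  simp [ListBlank.nth_mk]

/-- The effect of a machine instruction on the tape. -/
def applyStmt (T : Tape Γ) : TM0.Stmt Γ → Tape Γ
  | .move d => T.move d
  | .write a => T.write a

theorem step_eq_some_iff [Inhabited Λ] {M : TM0.Machine Γ Λ} {q : Λ} {T : Tape Γ}
    {c : TM0.Cfg Γ Λ} :
    TM0.step M ⟨q, T⟩ = some c ↔
      ∃ stmt, M q T.head = some (c.q, stmt) ∧ c.Tape = applyStmt T stmt := by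
  refine Option.map_eq_some_iff.trans ⟨?_, ?_⟩
  · rintro ⟨⟨q', _ | _⟩, hM, rfl⟩ <;> exact ⟨_, hM, rfl⟩
  · obtain ⟨q', T'⟩ := c
    rintro ⟨_ | _, hM, rfl⟩ <;> exact ⟨_, hM, rfl⟩

/-- The tape folded at the head: column `i` holds the cells at offsets `i` and `-i`. -/
def foldedTape (T : Tape Γ) (i : ℤ) : Γ × Γ :=
  (T.nth i, T.nth (-i))

theorem foldedTape_zero (T : Tape Γ) : foldedTape T 0 = (T.head, T.head) := rfl

theorem foldedTape_neg (T : Tape Γ) (i : ℤ) : foldedTape T (-i) = (foldedTape T i).swap := by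
  simp [foldedTape]

theorem foldedTape_mk₁ (l : List Γ) (i : ℕ) :
    foldedTape (Tape.mk₁ l) i = (l.getI i, if i = 0 then l.getI 0 else default) := by
  cases i with
  | zero => exact congrArg₂ _ (nth_mk₁_natCast l 0) (nth_mk₁_natCast l 0)
  | succ i => exact congrArg₂ _ (nth_mk₁_natCast l _) (nth_mk₁_neg_succ l i)

/-- The content of a column of the folded tape after an instruction, computed from the old content
of that column and of its two neighbours. -/
def foldedUpdate (leftmost : Bool) (west here east : Γ × Γ) : TM0.Stmt Γ → Γ × Γ
  | .move .right => (east.1, west.2)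
  | .move .left => (west.1, east.2)
  | .write a => if leftmost then (a, a) else here

theorem foldedTape_applyStmt (T : Tape Γ) (stmt : TM0.Stmt Γ) (i : ℤ) :
    foldedTape (applyStmt T stmt) i =
      foldedUpdate (i = 0) (foldedTape T (i - 1)) (foldedTape T i) (foldedTape T (i + 1)) stmt := by
  rcases stmt with (_ | _) | a
  · simp [foldedTape, applyStmt, foldedUpdate, Tape.move_left_nth, sub_eq_add_neg, add_comm]
  · simp [foldedTape, applyStmt, foldedUpdate, Tape.move_right_nth, sub_eq_add_neg, add_comm]
  · by_cases hi : i = 0 <;>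
      simp [foldedTape, applyStmt, foldedUpdate, Tape.write_nth, hi, -Tape.nth_zero]

variable {S : Set Λ}

/-- The compatibility of horizontally adjacent tiles: the fields shared by the tiles agree, and at
the left boundary the tape is folded, so that the two cells of a pair are swapped there. -/
structure FoldedTile.HorizMatch (s t : FoldedTile Γ S) : Prop where
  state_eq : s.state = t.state
  head_eq : s.head = t.head
  here_eq_west : s.here = t.west
  east_eq_here : s.east = t.here
  right_not_leftmost : t.leftmost = false
  west_eq_swap : s.leftmost = true → s.west = s.east.swap
  here_eq_head : s.leftmost = true → s.here = (s.head, s.head)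

/-- The row of tiles that encodes the configuration with state `q` and tape `T`. -/
def tileRow (q : S) (T : Tape Γ) (i : ℕ) : FoldedTile Γ S where
  state := q
  head := T.head
  leftmost := i = 0
  west := foldedTape T (i - 1)
  here := foldedTape T i
  east := foldedTape T (i + 1)

theorem horizMatch_tileRow (q : S) (T : Tape Γ) (i : ℕ) :
    (tileRow q T i).HorizMatch (tileRow q T (i + 1)) where
  state_eq := rfl
  head_eq := rfl
  here_eq_west := by simp [tileRow]
  east_eq_here := by simp [tileRow]
  right_not_leftmost := by simp [tileRow]
  west_eq_swap hi := by
    obtain rfl : i = 0 := by simpa [tileRow] using hi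
    exact foldedTape_neg T 1
  here_eq_head hi := by
    obtain rfl : i = 0 := by simpa [tileRow] using hi
    exact foldedTape_zero T

theorem eq_tileRow {r : ℕ → FoldedTile Γ S} (hleft : (r 0).leftmost = true)
    (hr : ∀ i, (r i).HorizMatch (r (i + 1))) {T : Tape Γ}
    (hT : ∀ i : ℕ, (r i).here = foldedTape T i) : r = tileRow (r 0).state T := by
  have hConst (i : ℕ) : (r i).state = (r 0).state ∧ (r i).head = T.head := by
    induction i with
    | zero => exact ⟨rfl, congrArg Prod.fst (((hr 0).here_eq_head hleft).symm.trans (hT 0))⟩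
    | succ i ih => exact ⟨(hr i).state_eq ▸ ih.1, (hr i).head_eq ▸ ih.2⟩
  have hSides (i : ℕ) : (r i).leftmost = decide (i = 0) ∧ (r i).west = foldedTape T (i - 1) := by
    rcases i with _ | i
    · refine ⟨hleft, ?_⟩
      rw [(hr 0).west_eq_swap hleft, (hr 0).east_eq_here, hT 1]
      exact (foldedTape_neg T 1).symm
    · refine ⟨by simpa using (hr i).right_not_leftmost, ?_⟩
      rw [← (hr i).here_eq_west, hT i, Nat.cast_succ, add_sub_cancel_right]
  funext i
  refine FoldedTile.ext (hConst i).1 (hConst i).2 (hSides i).1 (hSides i).2 (hT i) ?_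
  rw [(hr i).east_eq_here, hT (i + 1)]
  rfl

variable [Inhabited Λ]

/-- The tile system whose tilings above an input are the diverging runs of `M` on that input. -/
def machineTiles (M : TM0.Machine Γ Λ) (S : Set Λ) : TileSystem (FoldedTile Γ S) Γ where
  horiz := FoldedTile.HorizMatch
  vert s t := s.leftmost = t.leftmost ∧ ∃ stmt, M s.state s.head = some (↑t.state, stmt) ∧
    t.here = foldedUpdate s.leftmost s.west s.here s.east stmt
  south t g := t.state = (default : Λ) ∧ t.here.1 = g ∧ (t.leftmost = false → t.here.2 = default)
  corner t := t.leftmost = true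

variable {M : TM0.Machine Γ Λ}

theorem vert_tileRow {q q' : S} {T T' : Tape Γ} (h : TM0.step M ⟨q, T⟩ = some ⟨q', T'⟩) (i : ℕ) :
    (machineTiles M S).vert (tileRow q T i) (tileRow q' T' i) := by
  obtain ⟨stmt, hM, rfl : T' = _⟩ := step_eq_some_iff.1 h
  refine ⟨rfl, stmt, hM, ?_⟩
  simpa [tileRow] using foldedTape_applyStmt T stmt i

theorem south_tileRow {q : S} (hq : q = (default : Λ)) (l : List Γ) (i : ℕ) :
    (machineTiles M S).south (tileRow q (Tape.mk₁ l) i) (l.getI i) := by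
  refine ⟨hq, ?_, fun hi => ?_⟩
  · simp [tileRow, foldedTape_mk₁]
  · have : i ≠ 0 := by simpa [tileRow] using hi
    simp [tileRow, foldedTape_mk₁, this]

theorem eq_tileRow_init {r : ℕ → FoldedTile Γ S} (hleft : (r 0).leftmost = true)
    (hr : ∀ i, (r i).HorizMatch (r (i + 1))) {l : List Γ}
    (hl : ∀ i, (machineTiles M S).south (r i) (l.getI i)) :
    r = tileRow (r 0).state (Tape.mk₁ l) := by
  refine eq_tileRow hleft hr fun i => ?_
  rw [foldedTape_mk₁]
  refine Prod.ext (hl i).2.1 ?_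
  rcases i with _ | i
  · rw [(hr 0).here_eq_head hleft, if_pos rfl, ← (hl 0).2.1, (hr 0).here_eq_head hleft]
  · rw [(hl (i + 1)).2.2 (hr i).right_not_leftmost, if_neg i.succ_ne_zero]

theorem exists_step_of_vert_tileRow {q : S} {T : Tape Γ} {r : ℕ → FoldedTile Γ S}
    (hr : ∀ i, (r i).HorizMatch (r (i + 1)))
    (hv : ∀ i, (machineTiles M S).vert (tileRow q T i) (r i)) :
    ∃ T', TM0.step M ⟨q, T⟩ = some ⟨(r 0).state, T'⟩ ∧ r = tileRow (r 0).state T' := by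
  obtain ⟨hleft, stmt, hM, -⟩ := hv 0
  refine ⟨applyStmt T stmt, step_eq_some_iff.2 ⟨stmt, hM, rfl⟩,
    eq_tileRow (hleft.symm.trans (by simp [tileRow])) hr fun i => ?_⟩
  obtain ⟨-, stmt', hM', hHere⟩ := hv i
  obtain rfl : stmt' = stmt := congrArg Prod.snd (Option.some.inj (hM'.symm.trans hM))
  rw [hHere, foldedTape_applyStmt]
  simp [tileRow]

theorem exists_run_of_isTiling {l : List Γ} {τ : ℕ → ℕ → FoldedTile Γ S}
    (hτ : (machineTiles M S).IsTiling l.getI τ) :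
    ∃ c : ℕ → TM0.Cfg Γ Λ, c 0 = TM0.init l ∧ ∀ j, TM0.step M (c j) = some (c (j + 1)) := by
  have hstep : ∀ j (c : TM0.Cfg Γ Λ), (∃ q : S, ↑q = c.q ∧ (τ · j) = tileRow q c.Tape) →
      ∃ c', (∃ q : S, ↑q = c'.q ∧ (τ · (j + 1)) = tileRow q c'.Tape) ∧
        TM0.step M c = some c' := by
    rintro j ⟨_, T⟩ ⟨q, rfl, hRow⟩
    obtain ⟨T', hT', hRow'⟩ := exists_step_of_vert_tileRow (q := q) (T := T)
      (hτ.horiz · (j + 1)) fun i => congrFun hRow i ▸ hτ.vert i j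
    exact ⟨_, ⟨_, rfl, hRow'⟩, hT'⟩
  obtain ⟨c, h0, -, hc⟩ := exists_seq_of_forall_exists_succ hstep (x₀ := TM0.init l)
    ⟨(τ 0 0).state, (hτ.south 0).1,
      eq_tileRow_init (r := (τ · 0)) hτ.corner (hτ.horiz · 0) hτ.south⟩
  exact ⟨c, h0, hc⟩

theorem exists_isTiling_of_run (hS : TM0.Supports M S) {l : List Γ} {c : ℕ → TM0.Cfg Γ Λ}
    (h0 : c 0 = TM0.init l) (hc : ∀ j, TM0.step M (c j) = some (c (j + 1))) :
    ∃ τ, (machineTiles M S).IsTiling l.getI τ := by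
  have hmem (j : ℕ) : (c j).q ∈ S := by
    induction j with
    | zero => rw [h0]; exact hS.1
    | succ j ih => exact TM0.step_supports M hS (hc j) ih
  refine ⟨fun i j => tileRow ⟨(c j).q, hmem j⟩ (c j).Tape i, fun i j => horizMatch_tileRow _ _ i,
    fun i j => vert_tileRow (hc j) i, fun i => ?_, rfl⟩
  have hTape : (c 0).Tape = Tape.mk₁ l := by rw [h0]; rfl
  exact hTape ▸ south_tileRow (congrArg TM0.Cfg.q h0) l i

theorem tiles_machineTiles_iff (hS : TM0.Supports M S) (l : List Γ) :
    (machineTiles M S).Tiles l.getI ↔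
      ¬ (StateTransition.eval (TM0.step M) (TM0.init l)).Dom := by
  rw [not_dom_eval_iff]
  exact ⟨fun ⟨_, hτ⟩ => exists_run_of_isTiling hτ,
    fun ⟨_, h0, hc⟩ => exists_isTiling_of_run hS h0 hc⟩

end FoldedTape

section Definability

/-- A property of pointed structures that is expressed by a formula of FL²3T. -/
def Definable {m : ℕ} (P : ∀ ⦃A : Type⦄, Str A → (Fin m → A) → Prop) : Prop :=
  ∃ φ : F m, ∀ ⦃A : Type⦄ (M : Str A) (v : Fin m → A), Sat M φ v ↔ P M v

/-- The conjunction of a list of formulas. -/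
def conj {m : ℕ} (h : m ≤ 2) (l : List (F m)) : F m :=
  l.foldr .and (.not (.fls h))

theorem sat_conj {A : Type} {M : Str A} {m : ℕ} {h : m ≤ 2} {l : List (F m)} {v : Fin m → A} :
    Sat M (conj h l) v ↔ ∀ φ ∈ l, Sat M φ v := by
  induction l with
  | nil => simp [conj, Sat]
  | cons φ l ih =>
    rw [List.forall_mem_cons, ← ih]
    rfl

namespace Definable

variable {m : ℕ} {P Q : ∀ ⦃A : Type⦄, Str A → (Fin m → A) → Prop}

theorem congr (hP : Definable P) (h : ∀ ⦃A⦄ (M : Str A) v, P M v ↔ Q M v) : Definable Q :=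
  let ⟨φ, hφ⟩ := hP
  ⟨φ, fun _ M v => (hφ M v).trans (h M v)⟩

theorem const (p : Prop) (h : m ≤ 2 := by omega) : Definable fun _ _ (_ : Fin m → _) => p := by
  by_cases hp : p
  · exact ⟨.not (.fls h), fun _ _ _ => by simp [Sat, hp]⟩
  · exact ⟨.fls h, fun _ _ _ => by simp [Sat, hp]⟩

theorem unary (p : ℕ) (h : m ≤ 1 := by omega) :
    Definable fun _ M (v : Fin (m + 1) → _) => M.U p (v (Fin.last m)) :=
  ⟨.patom p (by omega) (by omega), fun _ _ _ => Iff.rfl⟩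

theorem binary (k : Fin 3) : Definable fun _ M (v : Fin 2 → _) => M.T k (v 0) (v 1) :=
  ⟨.batom k, fun _ _ _ => Iff.rfl⟩

theorem not (hP : Definable P) : Definable fun _ M v => ¬ P M v :=
  let ⟨φ, hφ⟩ := hP
  ⟨.not φ, fun _ M v => not_congr (hφ M v)⟩

theorem and (hP : Definable P) (hQ : Definable Q) : Definable fun _ M v => P M v ∧ Q M v :=
  let ⟨φ, hφ⟩ := hP
  let ⟨ψ, hψ⟩ := hQ
  ⟨.and φ ψ, fun _ M v => and_congr (hφ M v) (hψ M v)⟩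

theorem or (hP : Definable P) (hQ : Definable Q) : Definable fun _ M v => P M v ∨ Q M v :=
  let ⟨φ, hφ⟩ := hP
  let ⟨ψ, hψ⟩ := hQ
  ⟨.or φ ψ, fun _ M v => or_congr (hφ M v) (hψ M v)⟩

theorem imp (hP : Definable P) (hQ : Definable Q) : Definable fun _ M v => P M v → Q M v :=
  let ⟨φ, hφ⟩ := hP
  let ⟨ψ, hψ⟩ := hQ
  ⟨.imp φ ψ, fun _ M v => imp_congr (hφ M v) (hψ M v)⟩

theorem ex {R : ∀ ⦃A : Type⦄, Str A → (Fin m → A) → A → Prop}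
    (hR : Definable fun _ M (v : Fin (m + 1) → _) => R M (Fin.init v) (v (Fin.last m)))
    (h : m ≤ 1 := by omega) :
    Definable fun _ M v => ∃ x, R M v x :=
  let ⟨φ, hφ⟩ := hR
  ⟨.ex h φ, fun _ M v => exists_congr fun x => (hφ M _).trans (by simp)⟩

theorem all {R : ∀ ⦃A : Type⦄, Str A → (Fin m → A) → A → Prop}
    (hR : Definable fun _ M (v : Fin (m + 1) → _) => R M (Fin.init v) (v (Fin.last m)))
    (h : m ≤ 1 := by omega) :
    Definable fun _ M v => ∀ x, R M v x :=
  let ⟨φ, hφ⟩ := hR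
  ⟨.all h φ, fun _ M v => forall_congr' fun x => (hφ M _).trans (by simp)⟩

theorem forall_finite {ι : Type*} [Finite ι]
    {R : ι → ∀ ⦃A : Type⦄, Str A → (Fin m → A) → Prop} (hR : ∀ i, Definable (R i))
    (h : m ≤ 2 := by omega) :
    Definable fun _ M v => ∀ i, R i M v := by
  have := Fintype.ofFinite ι
  choose φ hφ using hR
  exact ⟨conj h (Finset.univ.toList.map φ), fun _ M v => by simp [sat_conj, hφ]⟩

theorem exists_finite {ι : Type*} [Finite ι]
    {R : ι → ∀ ⦃A : Type⦄, Str A → (Fin m → A) → Prop} (hR : ∀ i, Definable (R i))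
    (h : m ≤ 2 := by omega) :
    Definable fun _ M v => ∃ i, R i M v :=
  (forall_finite (fun i => (hR i).not) h).not.congr fun _ _ _ => by simp

end Definable

end Definability

section Labels

/-- The unary predicates of the reduction. In a grid, `node c r` marks the elements of the columns
`c` modulo `4` and rows `r` modulo `3`, `base c` the bottom elements of these columns, `pos p` the
bottom element of column `p`, and `tile t`, `symbol g` and `blank` describe the tiling, the word
below it and the blank part of that word. -/
inductive Label (K G : Type) : Type
  | node (c : ZMod 4) (r : ZMod 3)
  | base (c : ZMod 4)
  | tile (t : K)
  | symbol (g : G)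
  | blank
  | pos (p : ℕ)

/-- A numbering of the labels, given numberings of the tiles and of the letters. -/
def Label.code {K G : Type} (f : K → ℕ) (g : G → ℕ) : Label K G → ℕ
  | node c r => Nat.pair 0 (Nat.pair c.val r.val)
  | base c => Nat.pair 1 c.val
  | tile t => Nat.pair 2 (f t)
  | symbol a => Nat.pair 3 (g a)
  | blank => Nat.pair 4 0
  | pos p => Nat.pair 5 p

theorem Label.code_injective {K G : Type} {f : K → ℕ} {g : G → ℕ} (hf : f.Injective)
    (hg : g.Injective) : (code f g).Injective := by
  rintro (_ | _ | _ | _ | _ | _) (_ | _ | _ | _ | _ | _) h <;>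
    simp_all [code, Nat.pair_eq_pair, (ZMod.val_injective _).eq_iff, hf.eq_iff, hg.eq_iff]

open Classical in
/-- The relation that links the bottom elements of columns `c` and `c + 1`. -/
noncomputable def rightIdx (c : ZMod 4) : ZMod 3 :=
  if Even c then 0 else 2

open Classical in
/-- The relation that links the elements of column `c` in rows `r` and `r + 1`. -/
noncomputable def upIdx (c : ZMod 4) (r : ZMod 3) : ZMod 3 :=
  if Even c then r + 2 else r

section Rules

open Label

variable {K G A : Type} (P : Label K G → A → Prop) (T : ZMod 3 → A → A → Prop)

/-- The label `p` at the bottom of a column forces the label `q` at the bottom of the next one. -/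
def Propagates (p q : Label K G) : Prop :=
  ∀ c x, P p x → P (base c) x → ∀ y, P (base (c + 1)) y → T (rightIdx c) x y → P q y

/-- The axioms that force a model to contain a grid. -/
structure GridRules : Prop where
  origin : ∃ x, P (base 0) x ∧ P (pos 0) x
  node_of_base : ∀ c x, P (base c) x → P (node c 0) x
  right : ∀ c x, P (base c) x → ∃ y, P (base (c + 1)) y ∧ T (rightIdx c) x y
  up : ∀ c r x, P (node c r) x → ∃ y, P (node c (r + 1)) y ∧ T (upIdx c r) x y
  diag_excl : ∀ c d r, Even c → Odd d → ∀ x, P (node c r) x → ∀ y, P (node d (r + 1)) y →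
    T r x y → ¬ T (r + 2) x y
  base_excl : ∀ c, Odd c → ∀ x, P (node c 0) x → ∀ y, P (node c 1) y → T 0 x y → ¬ T 2 x y
  total : ∀ c d r, Even c → Odd d → ∀ x, P (node c r) x → ∀ y, P (node d r) y →
    T r x y ∨ T (r + 1) x y

/-- The axioms that make the tiles on a grid a tiling above the labelled bottom row. -/
structure TilingRules [Inhabited G] (𝒯 : TileSystem K G) : Prop where
  exists_tile : ∀ x, ∃ t, P (tile t) x
  vert : ∀ c r s t, ∀ x, P (node c r) x → P (tile s) x → ∀ y, P (node c (r + 1)) y →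
    P (tile t) y → T (upIdx c r) x y → 𝒯.vert s t
  horiz_even : ∀ c r s t, Even c → ∀ x, P (node c r) x → P (tile s) x → ∀ y,
    P (node (c + 1) r) y → P (tile t) y → T r x y → 𝒯.horiz s t
  horiz_odd : ∀ c r s t, Odd c → ∀ x, P (node (c + 1) r) x → P (tile t) x → ∀ y,
    P (node c r) y → P (tile s) y → T r x y → 𝒯.horiz s t
  horiz_base : ∀ c s t, Odd c → ∀ x, P (node c 0) x → P (tile s) x → ∀ y,
    P (node (c + 1) 0) y → P (tile t) y → T 2 x y → 𝒯.horiz s t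
  south : ∀ g t x, P (symbol g) x → P (tile t) x → 𝒯.south t g
  corner : ∀ t x, P (pos 0) x → P (tile t) x → 𝒯.corner t
  symbol_of_blank : ∀ x, P blank x → P (symbol default) x
  blank_propagates : Propagates P T blank blank

/-- The axioms that write the word `w`, followed by blanks, below the bottom row of a grid. -/
structure InputRules (w : List G) : Prop where
  blank_of_pos : ∀ x, P (pos w.length) x → P blank x
  symbol_of_pos : ∀ (p : ℕ) (hp : p < w.length) (x : A), P (pos p) x → P (symbol w[p]) x
  propagates : ∀ p < w.length, Propagates P T (pos p) (pos (p + 1))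

end Rules

section DefinableRules

open Definable

variable {K G : Type} (ι : Label K G → ℕ)

theorem definable_propagates (p q : Label K G) :
    Definable fun _ M (_ : Fin 0 → _) => Propagates (fun l => M.U (ι l)) M.T p q :=
  .forall_finite fun _ => .all <| .imp (.unary _) <| .imp (.unary _) <|
    .all <| .imp (.unary _) <| .imp (.binary _) <| .unary _

theorem definable_gridRules :
    Definable fun _ M (_ : Fin 0 → _) => GridRules (fun l => M.U (ι l)) M.T := by
  refine .congr (.and ?_ <| .and ?_ <| .and ?_ <| .and ?_ <| .and ?_ <| .and ?_ ?_)
    fun _ _ _ => Iff.symm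
      ⟨fun h => ⟨h.origin, h.node_of_base, h.right, h.up, h.diag_excl, h.base_excl, h.total⟩,
        fun ⟨h₁, h₂, h₃, h₄, h₅, h₆, h₇⟩ => ⟨h₁, h₂, h₃, h₄, h₅, h₆, h₇⟩⟩
  · exact .ex <| .and (.unary _) (.unary _)
  · exact .forall_finite fun _ => .all <| .imp (.unary _) (.unary _)
  · exact .forall_finite fun _ => .all <| .imp (.unary _) <| .ex <| .and (.unary _) (.binary _)
  · exact .forall_finite fun _ => .forall_finite fun _ =>
      .all <| .imp (.unary _) <| .ex <| .and (.unary _) (.binary _)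
  · exact .forall_finite fun _ => .forall_finite fun _ => .forall_finite fun _ =>
      .imp (.const _) <| .imp (.const _) <| .all <| .imp (.unary _) <|
        .all <| .imp (.unary _) <| .imp (.binary _) <| .not (.binary _)
  · exact .forall_finite fun _ => .imp (.const _) <| .all <| .imp (.unary _) <|
      .all <| .imp (.unary _) <| .imp (.binary _) <| .not (.binary _)
  · exact .forall_finite fun _ => .forall_finite fun _ => .forall_finite fun _ =>
      .imp (.const _) <| .imp (.const _) <| .all <| .imp (.unary _) <|
        .all <| .imp (.unary _) <| .or (.binary _) (.binary _)

theorem definable_tilingRules [Finite K] [Finite G] [Inhabited G] (𝒯 : TileSystem K G) :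
    Definable fun _ M (_ : Fin 0 → _) => TilingRules (fun l => M.U (ι l)) M.T 𝒯 := by
  refine .congr (.and ?_ <| .and ?_ <| .and ?_ <| .and ?_ <| .and ?_ <| .and ?_ <| .and ?_ <|
    .and ?_ ?_) fun _ _ _ => Iff.symm
      ⟨fun h => ⟨h.exists_tile, h.vert, h.horiz_even, h.horiz_odd, h.horiz_base, h.south,
          h.corner, h.symbol_of_blank, h.blank_propagates⟩,
        fun ⟨h₁, h₂, h₃, h₄, h₅, h₆, h₇, h₈, h₉⟩ => ⟨h₁, h₂, h₃, h₄, h₅, h₆, h₇, h₈, h₉⟩⟩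
  · exact .all <| .exists_finite fun _ => .unary _
  · exact .forall_finite fun _ => .forall_finite fun _ => .forall_finite fun _ =>
      .forall_finite fun _ => .all <| .imp (.unary _) <| .imp (.unary _) <| .all <|
        .imp (.unary _) <| .imp (.unary _) <| .imp (.binary _) (.const _)
  · exact .forall_finite fun _ => .forall_finite fun _ => .forall_finite fun _ =>
      .forall_finite fun _ => .imp (.const _) <| .all <| .imp (.unary _) <| .imp (.unary _) <|
        .all <| .imp (.unary _) <| .imp (.unary _) <| .imp (.binary _) (.const _)
  · exact .forall_finite fun _ => .forall_finite fun _ => .forall_finite fun _ =>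
      .forall_finite fun _ => .imp (.const _) <| .all <| .imp (.unary _) <| .imp (.unary _) <|
        .all <| .imp (.unary _) <| .imp (.unary _) <| .imp (.binary _) (.const _)
  · exact .forall_finite fun _ => .forall_finite fun _ => .forall_finite fun _ =>
      .imp (.const _) <| .all <| .imp (.unary _) <| .imp (.unary _) <|
        .all <| .imp (.unary _) <| .imp (.unary _) <| .imp (.binary _) (.const _)
  · exact .forall_finite fun _ => .forall_finite fun _ => .all <|
      .imp (.unary _) <| .imp (.unary _) (.const _)
  · exact .forall_finite fun _ => .all <| .imp (.unary _) <| .imp (.unary _) (.const _)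
  · exact .all <| .imp (.unary _) (.unary _)
  · exact definable_propagates ι _ _

end DefinableRules

end Labels

section InputSentence

/-- The sentence that expresses `∀ x, p x → q x`. -/
def containment (p q : ℕ) : F 0 :=
  .all zero_le_one (.imp (.patom p le_rfl one_le_two) (.patom q le_rfl one_le_two))

/-- The sentence that expresses `Propagates`, where `b c` codes the label `base c`. -/
noncomputable def propagation (b : ZMod 4 → ℕ) (p q : ℕ) : F 0 :=
  conj zero_le_two <| Finset.univ.toList.map fun c =>
    .all zero_le_one <| .imp (.patom p le_rfl one_le_two) <|
      .imp (.patom (b c) le_rfl one_le_two) <| .all le_rfl <|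
        .imp (.patom (b (c + 1)) one_le_two le_rfl) <|
          .imp (.batom (rightIdx c)) (.patom q one_le_two le_rfl)

variable {K G : Type}

/-- The sentence that expresses `InputRules` for a word of codes of labels `symbol g`. -/
noncomputable def inputSentence (ι : Label K G → ℕ) (w : List ℕ) : F 0 :=
  .and (containment (ι (.pos w.length)) (ι .blank)) <|
    .and
      (conj zero_le_two <| (List.range w.length).map fun p =>
        containment (ι (.pos p)) (w.getD p 0))
      (conj zero_le_two <| (List.range w.length).map fun p =>
        propagation (fun c => ι (.base c)) (ι (.pos p)) (ι (.pos (p + 1))))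

variable {A : Type} {M : Str A} {v : Fin 0 → A}

theorem sat_containment {p q : ℕ} :
    Sat M (containment p q) v ↔ ∀ x, M.U p x → M.U q x :=
  Iff.rfl

theorem sat_propagation {ι : Label K G → ℕ} {p q : Label K G} :
    Sat M (propagation (fun c => ι (.base c)) (ι p) (ι q)) v ↔
      Propagates (fun l => M.U (ι l)) M.T p q := by
  simp only [propagation, sat_conj, List.forall_mem_map, Finset.mem_toList, Finset.mem_univ,
    forall_const]
  exact Iff.rfl

theorem sat_inputSentence {ι : Label K G → ℕ} {w : List G} :
    Sat M (inputSentence ι (w.map fun g => ι (.symbol g))) v ↔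
      InputRules (fun l => M.U (ι l)) M.T w := by
  have hsymbol : (∀ p < w.length, ∀ x, M.U (ι (.pos p)) x →
        M.U ((w.map fun g => ι (.symbol g)).getD p 0) x) ↔
      ∀ p (hp : p < w.length) x, M.U (ι (.pos p)) x → M.U (ι (.symbol w[p])) x :=
    forall₂_congr fun p hp => by simp [hp]
  simp only [inputSentence, Sat, sat_conj, List.forall_mem_map, List.mem_range, List.length_map,
    sat_containment, sat_propagation, hsymbol]
  exact ⟨fun ⟨h₁, h₂, h₃⟩ => ⟨h₁, h₂, h₃⟩,
    fun h => ⟨h.blank_of_pos, h.symbol_of_pos, h.propagates⟩⟩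

end InputSentence

section Computability

/-- A family of formulas whose Gödel numbers are primitive recursive in the parameter. -/
def EncodePrimrec {α : Type*} [Primcodable α] {m : ℕ} (φ : α → F m) : Prop :=
  Primrec fun a => encode (φ a)

theorem encode_conj {m : ℕ} (h : m ≤ 2) (l : List (F m)) :
    encode (conj h l) =
      (l.map encode).foldr (fun e n => Nat.pair 4 (Nat.pair e n)) (encode (.not (.fls h))) := by
  induction l with
  | nil => rfl
  | cons φ l ih => exact congrArg (fun n => Nat.pair 4 (Nat.pair (encode φ) n)) ih

namespace EncodePrimrec

variable {α : Type*} [Primcodable α] {m : ℕ} {φ ψ : α → F m}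

theorem const (φ : F m) : EncodePrimrec fun _ : α => φ :=
  Primrec.const _

theorem patom {p : α → ℕ} (hp : Primrec p) (h₁ : 1 ≤ m) (h₂ : m ≤ 2) :
    EncodePrimrec fun a => .patom (p a) h₁ h₂ :=
  Primrec₂.natPair.comp (.const 0) hp

theorem and (hφ : EncodePrimrec φ) (hψ : EncodePrimrec ψ) :
    EncodePrimrec fun a => .and (φ a) (ψ a) :=
  Primrec₂.natPair.comp (.const 4) (Primrec₂.natPair.comp hφ hψ)

theorem imp (hφ : EncodePrimrec φ) (hψ : EncodePrimrec ψ) :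
    EncodePrimrec fun a => .imp (φ a) (ψ a) :=
  Primrec₂.natPair.comp (.const 6) (Primrec₂.natPair.comp hφ hψ)

theorem all {φ : α → F (m + 1)} (h : m ≤ 1) (hφ : EncodePrimrec φ) :
    EncodePrimrec fun a => .all h (φ a) :=
  Primrec₂.natPair.comp (.const 8) hφ

theorem conj (h : m ≤ 2) {l : α → List (F m)} (hl : Primrec fun a => (l a).map encode) :
    EncodePrimrec fun a => conj h (l a) :=
  (Primrec.list_foldr hl (.const (encode (.not (.fls h))))
    (Primrec₂.natPair.comp (.const 4)
      (Primrec₂.natPair.comp (Primrec.fst.comp .snd) (Primrec.snd.comp .snd))).to₂).of_eq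
    fun a => (encode_conj h (l a)).symm

theorem conj_map {β : Type*} (h : m ≤ 2) (l : List β) {φ : β → α → F m}
    (hφ : ∀ b, EncodePrimrec (φ b)) :
    EncodePrimrec fun a => FlutedThreeTrans.conj h (l.map fun b => φ b a) := by
  refine conj h ?_
  induction l with
  | nil => exact .const _
  | cons b l ih => exact Primrec.list_cons.comp (hφ b) ih

theorem conj_range (h : m ≤ 2) {n : α → ℕ} (hn : Primrec n) {φ : α → ℕ → F m}
    (hφ : EncodePrimrec fun x : α × ℕ => φ x.1 x.2) :
    EncodePrimrec fun a => FlutedThreeTrans.conj h ((List.range (n a)).map (φ a)) :=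
  conj h <| (Primrec.list_map (g := fun a p => encode (φ a p)) (Primrec.list_range.comp hn)
    hφ).of_eq fun a => by rw [List.map_map]; rfl

theorem containment {p q : α → ℕ} (hp : Primrec p) (hq : Primrec q) :
    EncodePrimrec fun a => containment (p a) (q a) :=
  .all _ <| .imp (.patom hp _ _) (.patom hq _ _)

theorem propagation (b : ZMod 4 → ℕ) {p q : α → ℕ} (hp : Primrec p) (hq : Primrec q) :
    EncodePrimrec fun a => propagation b (p a) (q a) :=
  .conj_map _ _ fun _ => .all _ <| .imp (.patom hp _ _) <| .imp (.const _) <| .all _ <|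
    .imp (.const _) <| .imp (.const _) (.patom hq _ _)

theorem inputSentence {K G : Type} {ι : Label K G → ℕ} (hι : Primrec fun p => ι (.pos p)) :
    EncodePrimrec (inputSentence ι) :=
  .and (.containment (hι.comp .list_length) (.const _)) <|
    .and
      (.conj_range _ .list_length
        (.containment (hι.comp .snd) ((Primrec.list_getD 0).comp .fst .snd)))
      (.conj_range _ .list_length
        (.propagation _ (hι.comp .snd) (hι.comp (Primrec.succ.comp .snd))))

end EncodePrimrec

end Computability

section Parity

theorem not_even_of_odd_zmod_four {c : ZMod 4} (hc : Odd c) : ¬ Even c := by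
  rintro ⟨a, rfl⟩
  obtain ⟨b, hb⟩ := hc
  revert a b
  decide

theorem even_natCast_zmod_four {n : ℕ} : Even (n : ZMod 4) ↔ Even n := by
  refine ⟨fun h => ?_, Even.natCast⟩
  by_contra hn
  exact not_even_of_odd_zmod_four (Nat.not_even_iff_odd.1 hn).natCast h

theorem odd_natCast_zmod_four {n : ℕ} : Odd (n : ZMod 4) ↔ Odd n := by
  refine ⟨fun h => ?_, Odd.natCast⟩
  by_contra hn
  exact not_even_of_odd_zmod_four h (Nat.not_odd_iff_even.1 hn).natCast

theorem rightIdx_of_even {c : ZMod 4} (hc : Even c) : rightIdx c = 0 := if_pos hc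

theorem rightIdx_of_odd {c : ZMod 4} (hc : Odd c) : rightIdx c = 2 :=
  if_neg (not_even_of_odd_zmod_four hc)

theorem upIdx_of_even {c : ZMod 4} (hc : Even c) (r : ZMod 3) : upIdx c r = r + 2 := if_pos hc

theorem upIdx_of_odd {c : ZMod 4} (hc : Odd c) (r : ZMod 3) : upIdx c r = r :=
  if_neg (not_even_of_odd_zmod_four hc)

end Parity

section GridExtraction

open Label

variable {K G A : Type} {P : Label K G → A → Prop} {T : ZMod 3 → A → A → Prop}

/-- `g i j` are the elements of a grid in a model, `i` being the column and `j` the row. Only the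
links along the bottom row and along the columns are recorded. -/
structure IsGrid (P : Label K G → A → Prop) (T : ZMod 3 → A → A → Prop) (g : ℕ → ℕ → A) :
    Prop where
  pos_zero : P (pos 0) (g 0 0)
  base : ∀ i : ℕ, P (base i) (g i 0)
  right : ∀ i : ℕ, T (rightIdx i) (g i 0) (g (i + 1) 0)
  node : ∀ i j : ℕ, P (node i j) (g i j)
  up : ∀ i j : ℕ, T (upIdx i j) (g i j) (g i (j + 1))

theorem GridRules.exists_isGrid (h : GridRules P T) : ∃ g, IsGrid P T g := by
  obtain ⟨x₀, hbase₀, hpos₀⟩ := h.origin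
  obtain ⟨b, rfl, hbase, hright⟩ := exists_seq_of_forall_exists_succ
    (Q := fun i x => P (base (i : ℕ)) x) (R := fun i x y => T (rightIdx (i : ℕ)) x y)
    (fun i x hx => by simpa using h.right i x hx) (x₀ := x₀) (by simpa using hbase₀)
  choose g hg₀ hnode hup using fun i : ℕ => exists_seq_of_forall_exists_succ
    (Q := fun j x => P (node i (j : ℕ)) x) (R := fun j x y => T (upIdx i (j : ℕ)) x y)
    (fun j x hx => by simpa using h.up i j x hx) (x₀ := b i)
    (by simpa using h.node_of_base i _ (hbase i))
  simp_rw [← hg₀] at hpos₀ hbase hright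
  exact ⟨g, hpos₀, hbase, hright, hnode, hup⟩

namespace IsGrid

variable {g : ℕ → ℕ → A}

theorem up_even (hg : IsGrid P T g) {i : ℕ} (hi : Even i) (j : ℕ) :
    T (j + 2) (g i j) (g i (j + 1)) :=
  upIdx_of_even hi.natCast j ▸ hg.up i j

theorem up_odd (hg : IsGrid P T g) {i : ℕ} (hi : Odd i) (j : ℕ) :
    T j (g i j) (g i (j + 1)) :=
  upIdx_of_odd hi.natCast j ▸ hg.up i j

theorem of_propagates (hg : IsGrid P T g) {p q : Label K G} (hpq : Propagates P T p q) {i : ℕ}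
    (hp : P p (g i 0)) : P q (g (i + 1) 0) :=
  hpq i _ hp (hg.base i) _ (by simpa using hg.base (i + 1)) (hg.right i)

theorem symbol_getI [Inhabited G] {𝒯 : TileSystem K G} {w : List G} (hg : IsGrid P T g)
    (ht : TilingRules P T 𝒯) (hw : InputRules P T w) (i : ℕ) : P (symbol (w.getI i)) (g i 0) := by
  have hpos (p : ℕ) (hp : p ≤ w.length) : P (pos p) (g p 0) := by
    induction p with
    | zero => exact hg.pos_zero
    | succ p ih => exact hg.of_propagates (hw.propagates p hp) (ih (by omega))
  have hblank (i : ℕ) (hi : w.length ≤ i) : P blank (g i 0) := by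
    induction i, hi using Nat.le_induction with
    | base => exact hw.blank_of_pos _ (hpos _ le_rfl)
    | succ i _ ih => exact hg.of_propagates ht.blank_propagates ih
  rcases lt_or_ge i w.length with hi | hi
  · exact List.getI_eq_getElem _ hi ▸ hw.symbol_of_pos i hi _ (hpos i hi.le)
  · exact List.getI_eq_default _ hi ▸ ht.symbol_of_blank _ (hblank i hi)

variable [∀ r, IsTrans A (T r)] (h : GridRules P T) (hg : IsGrid P T g)
include h hg

theorem link_succ {i i' : ℕ} (hi : Even i) (hi' : Odd i') {j : ℕ} (hj : T j (g i j) (g i' j)) :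
    T (j + 1 : ℕ) (g i (j + 1)) (g i' (j + 1)) := by
  have hdiag : T j (g i j) (g i' (j + 1)) := _root_.trans hj (hg.up_odd hi' j)
  have hexcl : ¬ T (j + 2) (g i j) (g i' (j + 1)) :=
    h.diag_excl i i' j hi.natCast hi'.natCast _ (hg.node i j) _ (by simpa using hg.node i' (j + 1))
      hdiag
  rcases h.total i i' (j + 1 : ℕ) hi.natCast hi'.natCast _ (hg.node i (j + 1)) _
    (hg.node i' (j + 1)) with hlink | hlink
  · exact hlink
  · have : T (j + 2) (g i (j + 1)) (g i' (j + 1)) := by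
      convert hlink using 1; push_cast; ring
    exact absurd (_root_.trans (hg.up_even hi j) this) hexcl

theorem link_right {i : ℕ} (hi : Even i) (j : ℕ) : T j (g i j) (g (i + 1) j) := by
  induction j with
  | zero => simpa [rightIdx_of_even hi.natCast] using hg.right i
  | succ j ih => exact link_succ h hg hi hi.add_one ih

theorem link_left_one {i : ℕ} (hi : Odd i) : T 1 (g (i + 1) 1) (g i 1) := by
  have hright : T 2 (g i 0) (g (i + 1) 0) := rightIdx_of_odd hi.natCast ▸ hg.right i
  have hdiag : T 2 (g i 0) (g (i + 1) 1) :=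
    _root_.trans hright (by simpa using hg.up_even hi.add_one 0)
  have hexcl : ¬ T 2 (g i 0) (g i 1) :=
    h.base_excl i hi.natCast _ (by simpa using hg.node i 0) _ (by simpa using hg.node i 1)
      (by simpa using hg.up_odd hi 0)
  rcases h.total (i + 1 : ℕ) i (1 : ℕ) hi.add_one.natCast hi.natCast _ (hg.node (i + 1) 1) _
    (hg.node i 1) with hlink | hlink
  · simpa only [Nat.cast_one] using hlink
  · rw [Nat.cast_one, one_add_one_eq_two] at hlink
    exact absurd (_root_.trans hdiag hlink) hexcl

theorem link_left {i : ℕ} (hi : Odd i) (j : ℕ) :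
    T (j + 1 : ℕ) (g (i + 1) (j + 1)) (g i (j + 1)) := by
  induction j with
  | zero => simpa using link_left_one h hg hi
  | succ j ih => exact link_succ h hg hi.add_one hi ih

variable [Inhabited G] {𝒯 : TileSystem K G} (ht : TilingRules P T 𝒯)
include ht

theorem horiz_of_tile {i j : ℕ} {s t : K} (hs : P (tile s) (g i j))
    (ht' : P (tile t) (g (i + 1) j)) : 𝒯.horiz s t := by
  have hnode : P (.node ((i : ZMod 4) + 1) j) (g (i + 1) j) := by simpa using hg.node (i + 1) j
  rcases i.even_or_odd with hi | hi
  · exact ht.horiz_even i j s t hi.natCast _ (hg.node i j) hs _ hnode ht' (link_right h hg hi j)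
  rcases j with _ | j
  · exact ht.horiz_base i s t hi.natCast _ (by simpa using hg.node i 0) hs _ (by simpa using hnode)
      ht' (rightIdx_of_odd hi.natCast ▸ hg.right i)
  · exact ht.horiz_odd i (j + 1 : ℕ) s t hi.natCast _ hnode ht' _ (hg.node i (j + 1)) hs
      (link_left h hg hi j)

theorem tiles {w : List G} (hw : InputRules P T w) : 𝒯.Tiles w.getI := by
  choose τ hτ using ht.exists_tile
  refine ⟨fun i j => τ (g i j), fun i j => horiz_of_tile h hg ht (hτ _) (hτ _), fun i j => ?_,
    fun i => ht.south _ _ _ (hg.symbol_getI ht hw i) (hτ _), ht.corner _ _ hg.pos_zero (hτ _)⟩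
  exact ht.vert i j _ _ _ (hg.node i j) (hτ _) _ (by simpa using hg.node i (j + 1)) (hτ _)
    (hg.up i j)

end IsGrid

end GridExtraction

section IntendedModel

/-- In the intended model, the points `(i, j)` and `(i', j')` of an even and an odd column whose
rows agree modulo `3`, but which are not next to each other. -/
def Far (i j i' j' : ℕ) : Prop :=
  i' % 2 = 1 ∧ j' % 3 = j % 3 ∧ ¬ (j' = j ∧ (i' = i + 1 ∨ i = i' + 1))

/-- The relation with index `k < 3` from `(i, j)` to `(i', j')` in the intended model: the
transitive closure of the links of the grid and of the links between far points that the axiom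
`GridRules.total` asks for. -/
def GridLink (k i j i' j' : ℕ) : Prop :=
  i % 2 = 0 ∧ j % 3 = k ∧ (i' = i + 1 ∨ i = i' + 1) ∧ (j' = j ∨ j' = j + 1) ∨
  i % 2 = 0 ∧ j % 3 = (k + 1) % 3 ∧ (i' = i ∧ j' = j + 1 ∨ Far i (j + 1) i' j') ∨
  i % 2 = 0 ∧ j % 3 = (k + 2) % 3 ∧ Far i j i' j' ∨
  i % 2 = 1 ∧ j % 3 = k ∧ i' = i ∧ j' = j + 1 ∨
  i % 2 = 1 ∧ k = 2 ∧ j = 0 ∧ (i' = i + 1 ∧ (j' = 0 ∨ j' = 1) ∨ Far (i + 1) 1 i' j')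

namespace GridLink

variable {k i j i' j' : ℕ}

theorem iff_of_even (hi : i % 2 = 0) (hj : j % 3 = k) :
    GridLink k i j i' j' ↔ (i' = i + 1 ∨ i = i' + 1) ∧ (j' = j ∨ j' = j + 1) := by
  have h₁ : k ≠ (k + 1) % 3 := by omega
  have h₂ : k ≠ (k + 2) % 3 := by omega
  simp [GridLink, hi, hj, h₁, h₂]

theorem iff_of_even_of_add_one (hi : i % 2 = 0) (hj : j % 3 = (k + 1) % 3) :
    GridLink k i j i' j' ↔ i' = i ∧ j' = j + 1 ∨ Far i (j + 1) i' j' := by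
  have h₁ : (k + 1) % 3 ≠ k := by omega
  have h₂ : (k + 1) % 3 ≠ (k + 2) % 3 := by omega
  simp [GridLink, hi, hj, h₁, h₂]

theorem iff_of_even_of_add_two (hi : i % 2 = 0) (hj : j % 3 = (k + 2) % 3) :
    GridLink k i j i' j' ↔ Far i j i' j' := by
  have h₁ : (k + 2) % 3 ≠ k := by omega
  have h₂ : (k + 2) % 3 ≠ (k + 1) % 3 := by omega
  simp [GridLink, hi, hj, h₁, h₂]

theorem iff_of_odd (hi : i % 2 = 1) (hj : j % 3 = k) :
    GridLink k i j i' j' ↔ i' = i ∧ j' = j + 1 := by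
  unfold GridLink Far; omega

theorem iff_of_odd_base (hi : i % 2 = 1) :
    GridLink 2 i 0 i' j' ↔ i' = i + 1 ∧ (j' = 0 ∨ j' = 1) ∨ Far (i + 1) 1 i' j' := by
  unfold GridLink Far; omega

theorem not_of_odd (hi : i % 2 = 1) (hj : j % 3 ≠ k) (h₀ : ¬ (k = 2 ∧ j = 0)) :
    ¬ GridLink k i j i' j' := by
  unfold GridLink Far; omega

-- Far points have no successors, which leaves few compositions to check in `trans`.
theorem not_of_far {i₀ j₀ : ℕ} (hj₀ : j₀ % 3 = (k + 2) % 3)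
    (h : Far i₀ j₀ i j) : ¬ GridLink k i j i' j' :=
  not_of_odd h.1 (by have := h.2.1; omega) (by have := h.2.1; omega)

theorem trans {i'' j'' : ℕ} (h : GridLink k i j i' j')
    (h' : GridLink k i' j' i'' j'') : GridLink k i j i'' j'' := by
  rcases h with ⟨hi, hj, hi', rfl | rfl⟩ | ⟨hi, hj, ⟨rfl, rfl⟩ | hfar⟩ | ⟨-, hj, hfar⟩ |
    ⟨hi, hj, rfl, rfl⟩ | ⟨hi, rfl, rfl, ⟨rfl, rfl | rfl⟩ | hfar⟩
  · rw [iff_of_odd (by omega) hj] at h'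
    rw [iff_of_even hi hj]
    omega
  · exact absurd h' (not_of_odd (by omega) (by omega) (by omega))
  · rw [iff_of_even_of_add_two hi (by omega)] at h'
    exact (iff_of_even_of_add_one hi hj).2 (.inr h')
  · exact absurd h' (not_of_far (by omega) hfar)
  · exact absurd h' (not_of_far hj hfar)
  · exact absurd h' (not_of_odd hi (by omega) (by omega))
  · rw [iff_of_even_of_add_one (by omega) (j := 0) rfl] at h'
    rw [iff_of_odd_base hi]
    exact h'.imp_left fun h => ⟨h.1, .inr h.2⟩
  · rw [iff_of_even_of_add_two (by omega) (j := 1) rfl] at h'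
    exact (iff_of_odd_base hi).2 (.inr h')
  · exact absurd h' (not_of_far (by rfl) hfar)

end GridLink

variable {K G : Type} [Inhabited G]

/-- The labels of a point in the intended model with tiling `τ` above the word `w`. -/
def gridLabel (w : List G) (τ : ℕ → ℕ → K) : Label K G → ℕ × ℕ → Prop
  | .node c r, x => (x.1 : ZMod 4) = c ∧ (x.2 : ZMod 3) = r
  | .base c, x => (x.1 : ZMod 4) = c ∧ x.2 = 0
  | .tile t, x => τ x.1 x.2 = t
  | .symbol g, x => x.2 = 0 ∧ w.getI x.1 = g
  | .blank, x => x.2 = 0 ∧ w.length ≤ x.1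
  | .pos p, x => x = (p, 0)

/-- The transitive relations of the intended model. -/
def gridRel (r : ZMod 3) (x y : ℕ × ℕ) : Prop :=
  GridLink r.val x.1 x.2 y.1 y.2

instance (r : ZMod 3) : IsTrans (ℕ × ℕ) (gridRel r) :=
  ⟨fun _ _ _ => GridLink.trans⟩

theorem gridRel_natCast {n i j i' j' : ℕ} :
    gridRel n (i, j) (i', j') ↔ GridLink (n % 3) i j i' j' := by
  rw [gridRel, ZMod.val_natCast]

theorem val_natCast_add_one (n : ℕ) : ((n : ZMod 3) + 1).val = (n + 1) % 3 :=
  mod_cast ZMod.val_natCast 3 (n + 1)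

theorem val_natCast_add_two (n : ℕ) : ((n : ZMod 3) + 2).val = (n + 2) % 3 :=
  mod_cast ZMod.val_natCast 3 (n + 2)

theorem natCast_eq_natCast_add_one {n a b : ℕ} :
    (a : ZMod n) = b + 1 ↔ a % n = (b + 1) % n := by
  exact_mod_cast ZMod.natCast_eq_natCast_iff' a (b + 1) n

theorem gridRules_grid (w : List G) (τ : ℕ → ℕ → K) : GridRules (gridLabel w τ) gridRel where
  origin := ⟨(0, 0), by simp [gridLabel], rfl⟩
  node_of_base := by
    rintro _ ⟨i, j⟩ ⟨rfl, rfl⟩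
    simp [gridLabel]
  right := by
    rintro _ ⟨i, j⟩ ⟨rfl, rfl : j = 0⟩
    refine ⟨(i + 1, 0), by simp [gridLabel], ?_⟩
    rcases i.even_or_odd with hi | hi
    · rw [rightIdx_of_even hi.natCast]
      exact (GridLink.iff_of_even (Nat.even_iff.1 hi) rfl).2 ⟨.inl rfl, .inl rfl⟩
    · rw [rightIdx_of_odd hi.natCast]
      exact (GridLink.iff_of_odd_base (Nat.odd_iff.1 hi)).2 (.inl ⟨rfl, .inl rfl⟩)
  up := by
    rintro _ _ ⟨i, j⟩ ⟨rfl, rfl⟩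
    refine ⟨(i, j + 1), by simp [gridLabel], ?_⟩
    rcases i.even_or_odd with hi | hi
    · rw [upIdx_of_even hi.natCast, gridRel, val_natCast_add_two]
      exact (GridLink.iff_of_even_of_add_one (Nat.even_iff.1 hi) (by omega)).2 (.inl ⟨rfl, rfl⟩)
    · rw [upIdx_of_odd hi.natCast, gridRel_natCast]
      exact (GridLink.iff_of_odd (Nat.odd_iff.1 hi) rfl).2 ⟨rfl, rfl⟩
  diag_excl := by
    rintro _ _ _ hi hi' ⟨i, j⟩ ⟨rfl, rfl⟩ ⟨i', j'⟩ ⟨rfl, hj'⟩ h h'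
    rw [even_natCast_zmod_four, Nat.even_iff] at hi
    rw [odd_natCast_zmod_four, Nat.odd_iff] at hi'
    rw [natCast_eq_natCast_add_one] at hj'
    rw [gridRel_natCast, GridLink.iff_of_even hi rfl] at h
    rw [gridRel, val_natCast_add_two, GridLink.iff_of_even_of_add_one hi (by omega)] at h'
    unfold Far at h'
    omega
  base_excl := by
    rintro _ hi ⟨i, j⟩ ⟨rfl, hj : (j : ZMod 3) = 0⟩ ⟨i', j'⟩ - h h'
    rw [odd_natCast_zmod_four, Nat.odd_iff] at hi
    rw [ZMod.natCast_eq_zero_iff] at hj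
    obtain ⟨hi', hj'⟩ : i' = i ∧ j' = j + 1 :=
      (GridLink.iff_of_odd hi (Nat.mod_eq_zero_of_dvd hj)).1 h
    rcases j.eq_zero_or_pos with rfl | hj₀
    · have hfar := (GridLink.iff_of_odd_base hi).1 h'
      unfold Far at hfar
      omega
    · exact GridLink.not_of_odd hi (by rw [Nat.mod_eq_zero_of_dvd hj]; decide) (by omega) h'
  total := by
    rintro _ _ _ hi hi' ⟨i, j⟩ ⟨rfl, rfl⟩ ⟨i', j'⟩ ⟨rfl, hj'⟩
    rw [even_natCast_zmod_four, Nat.even_iff] at hi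
    rw [odd_natCast_zmod_four, Nat.odd_iff] at hi'
    rw [ZMod.natCast_eq_natCast_iff'] at hj'
    rw [gridRel_natCast, gridRel, val_natCast_add_one, GridLink.iff_of_even hi rfl,
      GridLink.iff_of_even_of_add_two hi (by omega), Far]
    omega

section Links

variable {i j i' j' : ℕ}

theorem eq_of_gridRel_upIdx (hi' : (i' : ZMod 4) = i)
    (h : gridRel (upIdx i j) (i, j) (i', j')) : i' = i ∧ j' = j + 1 := by
  rcases i.even_or_odd with hi | hi
  · rw [upIdx_of_even hi.natCast, gridRel, val_natCast_add_two,
      GridLink.iff_of_even_of_add_one (Nat.even_iff.1 hi) (by omega)] at h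
    rw [← even_natCast_zmod_four, ← hi', even_natCast_zmod_four, Nat.even_iff] at hi
    exact h.resolve_right fun hfar => by have := hfar.1; omega
  · rw [upIdx_of_odd hi.natCast, gridRel_natCast] at h
    exact (GridLink.iff_of_odd (Nat.odd_iff.1 hi) rfl).1 h

theorem adjacent_of_gridRel (hi : Even (i : ZMod 4)) (hj' : (j' : ZMod 3) = j)
    (h : gridRel j (i, j) (i', j')) : (i' = i + 1 ∨ i = i' + 1) ∧ j' = j := by
  rw [even_natCast_zmod_four, Nat.even_iff] at hi
  rw [ZMod.natCast_eq_natCast_iff'] at hj'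
  rw [gridRel_natCast, GridLink.iff_of_even hi rfl] at h
  omega

theorem eq_of_gridRel_two (hi : Odd (i : ZMod 4)) (hj : (j : ZMod 3) = 0)
    (hj' : (j' : ZMod 3) = 0) (h : gridRel 2 (i, j) (i', j')) : i' = i + 1 ∧ j = 0 ∧ j' = 0 := by
  rw [odd_natCast_zmod_four, Nat.odd_iff] at hi
  rw [ZMod.natCast_eq_zero_iff] at hj hj'
  obtain rfl : j = 0 := by
    by_contra hj₀
    exact GridLink.not_of_odd hi (by rw [Nat.mod_eq_zero_of_dvd hj]; decide) (by omega) h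
  have hlink := (GridLink.iff_of_odd_base hi).1 h
  unfold Far at hlink
  omega

theorem eq_of_gridRel_rightIdx (hi' : (i' : ZMod 4) = i + 1)
    (h : gridRel (rightIdx i) (i, 0) (i', 0)) : i' = i + 1 := by
  rcases i.even_or_odd with hi | hi
  · rw [rightIdx_of_even hi.natCast] at h
    rw [natCast_eq_natCast_add_one] at hi'
    have := (adjacent_of_gridRel hi.natCast rfl (Nat.cast_zero (R := ZMod 3) ▸ h)).1
    omega
  · rw [rightIdx_of_odd hi.natCast] at h
    exact (eq_of_gridRel_two hi.natCast Nat.cast_zero Nat.cast_zero h).1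

end Links

variable {𝒯 : TileSystem K G} {w : List G} {τ : ℕ → ℕ → K}

theorem tilingRules_grid (hτ : 𝒯.IsTiling w.getI τ) :
    TilingRules (gridLabel w τ) gridRel 𝒯 where
  exists_tile x := ⟨τ x.1 x.2, rfl⟩
  vert := by
    rintro _ _ _ _ ⟨i, j⟩ ⟨rfl, rfl⟩ rfl ⟨i', j'⟩ ⟨hi', -⟩ rfl h
    obtain ⟨rfl, rfl⟩ : i' = i ∧ j' = j + 1 := eq_of_gridRel_upIdx hi' h
    exact hτ.vert _ _
  horiz_even := by
    rintro _ _ _ _ hi ⟨i, j⟩ ⟨rfl, rfl⟩ rfl ⟨i', j'⟩ ⟨hi', hj'⟩ rfl h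
    obtain ⟨hadj, rfl⟩ := adjacent_of_gridRel hi hj' h
    obtain rfl : i' = i + 1 := by rw [natCast_eq_natCast_add_one] at hi'; omega
    exact hτ.horiz _ _
  horiz_odd := by
    rintro _ _ _ _ hi ⟨i', j'⟩ ⟨hi', rfl⟩ rfl ⟨i, j⟩ ⟨rfl, hj⟩ rfl h
    obtain ⟨hadj, rfl⟩ := adjacent_of_gridRel (hi' ▸ hi.add_one) hj h
    obtain rfl : i' = i + 1 := by rw [natCast_eq_natCast_add_one] at hi'; omega
    exact hτ.horiz _ _
  horiz_base := by
    rintro _ _ _ hi ⟨i, j⟩ ⟨rfl, hj⟩ rfl ⟨i', j'⟩ ⟨-, hj'⟩ rfl h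
    obtain ⟨rfl, rfl, rfl⟩ := eq_of_gridRel_two hi hj hj' h
    exact hτ.horiz _ _
  south := by
    rintro _ _ ⟨i, j⟩ ⟨rfl, rfl⟩ rfl
    exact hτ.south i
  corner := by
    rintro _ _ rfl rfl
    exact hτ.corner
  symbol_of_blank := fun _ ⟨hx, hw⟩ => ⟨hx, List.getI_eq_default _ hw⟩
  blank_propagates := by
    rintro _ ⟨i, j⟩ ⟨rfl, hi⟩ ⟨rfl, -⟩ ⟨i', j'⟩ ⟨hi', rfl⟩ h
    obtain rfl := eq_of_gridRel_rightIdx hi' h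
    exact ⟨rfl, Nat.le_succ_of_le hi⟩

theorem inputRules_grid (w : List G) (τ : ℕ → ℕ → K) :
    InputRules (gridLabel w τ) gridRel w where
  blank_of_pos := by
    rintro _ rfl
    exact ⟨rfl, le_rfl⟩
  symbol_of_pos := by
    rintro p hp _ rfl
    exact ⟨rfl, List.getI_eq_getElem _ hp⟩
  propagates := by
    rintro p - _ _ rfl ⟨rfl, -⟩ ⟨i', j'⟩ ⟨hi', rfl⟩ h
    obtain rfl := eq_of_gridRel_rightIdx hi' h
    rfl

end IntendedModel

section Undecidability

variable {K G : Type} [Inhabited G] {𝒯 : TileSystem K G}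

theorem satisfiable_iff_tiles {ι : Label K G → ℕ} (hι : ι.Injective) {φ : F 0}
    (hφ : ∀ ⦃A : Type⦄ (M : Str A) v, Sat M φ v ↔
      GridRules (fun l => M.U (ι l)) M.T ∧ TilingRules (fun l => M.U (ι l)) M.T 𝒯)
    (w : List G) :
    Satisfiable (.and φ (inputSentence ι (w.map fun g => ι (.symbol g)))) ↔ 𝒯.Tiles w.getI := by
  constructor
  · rintro ⟨A, _, M, hT, hM, hw⟩
    have (r : ZMod 3) : IsTrans A (M.T r) := ⟨fun _ _ _ => @hT r _ _ _⟩
    have ⟨h, ht⟩ := (hφ M _).1 hM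
    obtain ⟨g, hg⟩ := h.exists_isGrid
    exact hg.tiles h ht (sat_inputSentence.1 hw)
  · rintro ⟨τ, hτ⟩
    let M : Str (ℕ × ℕ) := ⟨fun n x => ∃ l, ι l = n ∧ gridLabel w τ l x, gridRel⟩
    have hU : (fun l => M.U (ι l)) = gridLabel w τ := by
      ext l x
      simp [M, hι.eq_iff]
    refine ⟨ℕ × ℕ, inferInstance, M, fun _ _ _ _ => GridLink.trans, (hφ M _).2 ?_,
      sat_inputSentence.2 ?_⟩ <;> rw [hU]
    · exact ⟨gridRules_grid w τ, tilingRules_grid hτ⟩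
    · exact inputRules_grid w τ

theorem exists_primrec_reduction {f : ℕ →. ℕ} (hf : Partrec f) :
    ∃ φ : ℕ → F 0, EncodePrimrec φ ∧ ∀ n, Satisfiable (φ n) ↔ ¬ (f n).Dom := by
  obtain ⟨Γ, Λ, _, _, _, M, S, input, hfin, hS, hinput, hM⟩ := exists_TM0_of_partrec hf
  have := finite_foldedTile (Γ := Γ) hfin
  obtain ⟨tileCode, htile⟩ := Countable.exists_injective_nat (FoldedTile Γ S)
  obtain ⟨symbolCode, hsymbol⟩ := Countable.exists_injective_nat Γ
  let ι := Label.code tileCode symbolCode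
  obtain ⟨φ, hφ⟩ := (definable_gridRules ι).and (definable_tilingRules ι (machineTiles M S))
  refine ⟨fun n => .and φ (inputSentence ι ((input n).map fun g => ι (.symbol g))), ?_, fun n => ?_⟩
  · have hpos : Primrec fun p => ι (.pos p) := Primrec₂.natPair.comp (.const 5) .id
    exact .and (.const φ) ((EncodePrimrec.inputSentence hpos).comp (hinput _))
  · rw [satisfiable_iff_tiles (Label.code_injective htile hsymbol) hφ, tiles_machineTiles_iff hS,
      hM]

end Undecidability

/-- Theorem 7.  The satisfiability problem for FL²3T is
undecidable: no computable function decides, given (the Gödel number of) a sentence of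
FL²3T, whether it has a model in which the three distinguished binary relations are
transitive. -/
theorem flutedThreeTrans_sat_undecidable :
    ¬ ∃ f : ℕ → Bool, Computable f ∧
      ∀ φ : F 0, (f (encode φ) = true ↔ Satisfiable φ) := by
  rintro ⟨f, hf, hdec⟩
  have hhalt : Partrec fun n => (Denumerable.ofNat Nat.Partrec.Code n).eval 0 :=
    Nat.Partrec.Code.eval_part.comp (Computable.ofNat _) (Computable.const 0)
  obtain ⟨φ, hφ, hsat⟩ := exists_primrec_reduction hhalt
  have hdom (c : Nat.Partrec.Code) :
      f (encode (φ (Encodable.encode c))) = false ↔ (c.eval 0).Dom := by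
    rw [← Bool.not_eq_true, hdec, hsat, not_not, Denumerable.ofNat_encode]
  refine ComputablePred.halting_problem 0 (ComputablePred.computable_iff.2
    ⟨fun c => !f (encode (φ (Encodable.encode c))), ?_, ?_⟩)
  · exact Primrec.not.to_comp.comp (hf.comp (hφ.to_comp.comp .encode))
  · simp [hdom]

end FlutedThreeTrans
end

section
/- There is a sentence of FL²3T (the two-variable fluted fragment with three distinguished transitive relations, without equality) that is satisfiable in a structure where all three distinguished relations are transitive, but has no finite such model; that is, FL²3T admits axioms of infinity and does not have the finite model property. -/
/- STATEMENT 14: FL²3T admits axioms of infinity: some satisfiable sentence of the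
two-variable fluted fragment with three distinguished transitive relations has no
finite model; hence FL²3T lacks the finite model property. -/

namespace FlutedThreeTrans

/-- `φ` has a finite model in which all three distinguished binary relations are
transitive. -/
def FinitelySatisfiable (φ : F 0) : Prop :=
  ∃ (A : Type) (_ : Nonempty A) (_ : Finite A) (M : Str A),
    (∀ k, Transitive (M.T k)) ∧ Sat M φ (fun i => i.elim0)

/-!
The sentence distributes elements over three colours in cyclic order and speaks of two transitive
relations, `s` and `r`: every element of colour `k` has an `s`-successor of colour `k + 1` which is
not an `r`-successor, while all its `s`-successors of colour `k + 2` are `r`-successors. On `ℕ`,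
coloured by residues modulo `3`, this holds with `s` the relation `<` and `r` the relation
`m + 2 ≤ n`. In a finite model some coloured `a` lies in a terminal strongly connected component
of `s` on the coloured elements. Walking two steps `a → b → c` then yields `s c a`, hence `s c b`;
since `k + 2 + 2 = k + 1`, both `s a c` and `s c b` jump two colours ahead, so `r a c` and `r c b`,
whence `r a b`, contrary to the choice of `b`.
-/

theorem exists_mem_forall_rel_imp_rel_of_finite {A : Type*} (s : A → A → Prop) [IsTrans A s]
    {S : Set A} (hS : S.Finite) (hne : S.Nonempty) : ∃ a ∈ S, ∀ b ∈ S, s a b → s b a := by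
  let _ : Preorder A :=
    { le := Relation.ReflGen s
      le_refl := fun _ => .refl
      le_trans := fun _ _ _ => _root_.trans }
  obtain ⟨a, haS, hmax⟩ := hS.exists_maximal hne
  refine ⟨a, haS, fun b hbS hab => ?_⟩
  cases hmax hbS (.single hab) with
  | refl => exact hab
  | single hba => exact hba

/-- The configuration forced by the axiom of infinity: cyclic colours `C` (an element may carry
several), a relation `s` leading from each coloured element to the next colour, and a relation `r`
that avoids such a step but contains all `s`-pairs two colours apart. -/
structure IsSpiral {A : Type*} (C : Fin 3 → A → Prop) (r s : A → A → Prop) : Prop where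
  exists_colour_zero : ∃ a, C 0 a
  exists_step : ∀ k a, C k a → ∃ b, C (k + 1) b ∧ s a b ∧ ¬ r a b
  rel_of_skip : ∀ k a, C k a → ∀ b, C (k + 2) b → s a b → r a b

theorem IsSpiral.infinite {A : Type*} {C : Fin 3 → A → Prop} {r s : A → A → Prop}
    [IsTrans A r] [IsTrans A s] (h : IsSpiral C r s) : Infinite A := by
  by_contra hA
  rw [not_infinite_iff_finite] at hA
  obtain ⟨a₀, ha₀⟩ := h.exists_colour_zero
  obtain ⟨a, ⟨k, ha⟩, hterminal⟩ := exists_mem_forall_rel_imp_rel_of_finite s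
    (Set.toFinite {a | ∃ k, C k a}) ⟨a₀, 0, ha₀⟩
  obtain ⟨b, hb, hsab, hrab⟩ := h.exists_step k a ha
  obtain ⟨c, hc, hsbc, -⟩ := h.exists_step (k + 1) b hb
  have hsac : s a c := _root_.trans hsab hsbc
  have hscb : s c b := _root_.trans (hterminal c ⟨_, hc⟩ hsac) hsab
  have hrac : r a c := h.rel_of_skip k a ha c (by rwa [add_assoc] at hc) hsac
  have hrcb : r c b := by
    refine h.rel_of_skip (k + 1 + 1) c hc b ?_ hscb
    rwa [add_assoc, add_assoc, show (1 + (1 + 2) : Fin 3) = 1 from rfl]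
  exact hrab (_root_.trans hrac hrcb)

theorem isSpiral_nat :
    IsSpiral (fun k n => n ≡ k [MOD 3]) (fun m n : ℕ => m + 2 ≤ n) (· < ·) where
  exists_colour_zero := ⟨0, rfl⟩
  exists_step k n hn := by
    refine ⟨n + 1, ?_, n.lt_succ_self, by omega⟩
    simpa [Fin.val_add, Nat.ModEq] using hn.add_right 1
  rel_of_skip k m hm n hn hmn := by
    simp only [Nat.ModEq, Fin.val_add] at hm hn
    omega

/-- The axiom for `IsSpiral.exists_step` at colour `k`, with `r` and `s` denoted by the binary
predicates `i` and `j`. -/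
def stepAxiom (i j k : Fin 3) : F 1 :=
  .imp (.patom k le_rfl one_le_two)
    (.ex le_rfl (.and (.patom ↑(k + 1) one_le_two le_rfl) (.and (.batom j) (.not (.batom i)))))

/-- The axiom for `IsSpiral.rel_of_skip` at colour `k`, with `r` and `s` denoted by the binary
predicates `i` and `j`. -/
def skipAxiom (i j k : Fin 3) : F 1 :=
  .imp (.patom k le_rfl one_le_two)
    (.all le_rfl (.imp (.patom ↑(k + 2) one_le_two le_rfl) (.imp (.batom j) (.batom i))))

/-- The axiom of infinity, which expresses `IsSpiral` with `r` and `s` denoted by the binary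
predicates `i` and `j`, and colour `k` by the unary predicate `k`. -/
def spiralSentence (i j : Fin 3) : F 0 :=
  .and (.ex zero_le_one (.patom 0 le_rfl one_le_two))
    (.all zero_le_one
      (.and (.and (stepAxiom i j 0) (skipAxiom i j 0))
        (.and (.and (stepAxiom i j 1) (skipAxiom i j 1))
          (.and (stepAxiom i j 2) (skipAxiom i j 2)))))

theorem sat_spiralSentence_iff {A : Type} {M : Str A} {i j : Fin 3} {v : Fin 0 → A} :
    Sat M (spiralSentence i j) v ↔ IsSpiral (fun k => M.U k) (M.T i) (M.T j) := by
  have sat_step (k : Fin 3) (a : A) : Sat M (stepAxiom i j k) (Fin.snoc v a) ↔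
      (M.U k a → ∃ b, M.U ↑(k + 1) b ∧ M.T j a b ∧ ¬ M.T i a b) := Iff.rfl
  have sat_skip (k : Fin 3) (a : A) : Sat M (skipAxiom i j k) (Fin.snoc v a) ↔
      (M.U k a → ∀ b, M.U ↑(k + 2) b → M.T j a b → M.T i a b) := Iff.rfl
  have sat_spiral : Sat M (spiralSentence i j) v ↔ (∃ a, M.U 0 a) ∧ ∀ a, ∀ k : Fin 3,
      Sat M (stepAxiom i j k) (Fin.snoc v a) ∧ Sat M (skipAxiom i j k) (Fin.snoc v a) := by
    simp only [Fin.forall_fin_succ, IsEmpty.forall_iff, and_true]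
    exact Iff.rfl
  simp only [sat_spiral, sat_step, sat_skip]
  exact ⟨fun ⟨h₀, h⟩ => ⟨h₀, fun k a => (h a k).1, fun k a => (h a k).2⟩,
    fun h => ⟨h.1, fun a k => ⟨h.2 k a, h.3 k a⟩⟩⟩

/-- The model of `spiralSentence i j` on `ℕ`, coloured by residues modulo `3`: the predicate `i`
denotes `m + 2 ≤ n`, and the other two denote `<`. -/
def natSpiral (i : Fin 3) : Str ℕ where
  U p n := n ≡ p [MOD 3]
  T := Function.update (fun _ => (· < ·)) i fun m n => m + 2 ≤ n

instance isTrans_natSpiral (i k : Fin 3) : IsTrans ℕ ((natSpiral i).T k) where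
  trans l m n := by
    by_cases hk : k = i
    · subst hk
      simp only [natSpiral, Function.update_self]
      omega
    · simp only [natSpiral, Function.update_of_ne hk]
      exact lt_trans

theorem satisfiable_spiralSentence {i j : Fin 3} (hij : i ≠ j) :
    Satisfiable (spiralSentence i j) := by
  refine ⟨ℕ, ⟨0⟩, natSpiral i, fun _ _ _ _ => _root_.trans, sat_spiralSentence_iff.2 ?_⟩
  simpa [natSpiral, hij.symm] using isSpiral_nat

/-- The distinguished binary predicates occurring in a formula, used to single out the sentences
with only two transitive relations. -/
def F.binarySymbols : ∀ {m : ℕ}, F m → Finset (Fin 3)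
  | _, .patom _ _ _ => ∅
  | _, .batom k => {k}
  | _, .fls _ => ∅
  | _, .not φ => φ.binarySymbols
  | _, .and φ ψ => φ.binarySymbols ∪ ψ.binarySymbols
  | _, .or φ ψ => φ.binarySymbols ∪ ψ.binarySymbols
  | _, .imp φ ψ => φ.binarySymbols ∪ ψ.binarySymbols
  | _, .ex _ φ => φ.binarySymbols
  | _, .all _ φ => φ.binarySymbols

theorem binarySymbols_spiralSentence (i j : Fin 3) :
    (spiralSentence i j).binarySymbols = {i, j} := by
  simp [spiralSentence, stepAxiom, skipAxiom, F.binarySymbols, Finset.pair_comm]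

theorem flutedThreeTrans_infinity_axiom_general {i j : Fin 3} (hij : i ≠ j) :
    ∃ φ : F 0, φ.binarySymbols ⊆ {i, j} ∧ Satisfiable φ ∧
      ∀ (A : Type) [Finite A] (M : Str A), IsTrans A (M.T i) → IsTrans A (M.T j) →
        ¬ Sat M φ (fun k => k.elim0) := by
  refine ⟨spiralSentence i j, (binarySymbols_spiralSentence i j).subset,
    satisfiable_spiralSentence hij, fun A _ M _ _ hM => ?_⟩
  have : Infinite A := (sat_spiralSentence_iff.1 hM).infinite
  exact not_finite A

/-- There is a sentence of FL²3T that is satisfiable in a structure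
where all three distinguished relations are transitive, but has no finite such model;
that is, FL²3T admits axioms of infinity and does not have the finite model
property. -/
theorem flutedThreeTrans_infinity_axiom :
    ∃ φ : F 0, Satisfiable φ ∧ ¬ FinitelySatisfiable φ := by
  obtain ⟨φ, -, hsat, hfin⟩ := flutedThreeTrans_infinity_axiom_general (i := 0) (j := 1) (by decide)
  exact ⟨φ, hsat, fun ⟨A, _, _, M, hT, hM⟩ => hfin A M ⟨hT 0⟩ ⟨hT 1⟩ hM⟩

end FlutedThreeTrans
end

section
/- There is a computable map assigning to each tiling system 𝒞 = (C, C_H, C_V) a sentence η_𝒞 of FL² with equality and two distinguished transitive relations such that: η_𝒞 is satisfiable (with both distinguished relations transitive) iff 𝒞 tiles ℤ × ℤ, and η_𝒞 is finitely satisfiable iff 𝒞 tiles the torus ℤ_t × ℤ_t for some t ≥ 1. -/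
/- STATEMENT 17: Reduction of the ℤ×ℤ (and torus) tiling problems to (finite)
satisfiability of the two-variable fluted fragment with equality and two
distinguished transitive relations. -/

namespace FlutedTwoTransEq

/-- FL²-formulas with equality over countably many unary predicates (indexed by `ℕ`)
and two distinguished binary predicates (indexed by `Fin 2`); the index `m ≤ 2` records
that the free variables form a suffix of `x₁, …, x_m`, all atoms ending at the last
variable, and only the last variable may be quantified. -/
inductive F : ℕ → Type
  | patom (p : ℕ) {m : ℕ} (h1 : 1 ≤ m) (h2 : m ≤ 2) : F m
  | batom (k : Fin 2) : F 2
  | eqatom : F 2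
  | fls {m : ℕ} (h : m ≤ 2) : F m
  | not {m : ℕ} (φ : F m) : F m
  | and {m : ℕ} (φ ψ : F m) : F m
  | or {m : ℕ} (φ ψ : F m) : F m
  | imp {m : ℕ} (φ ψ : F m) : F m
  | ex {m : ℕ} (h : m ≤ 1) (φ : F (m + 1)) : F m
  | all {m : ℕ} (h : m ≤ 1) (φ : F (m + 1)) : F m

/-- A structure interpreting the unary predicates and the two distinguished binary
predicates. -/
structure Str (A : Type) where
  U : ℕ → A → Prop
  T : Fin 2 → A → A → Prop

def Sat {A : Type} (M : Str A) : ∀ {m : ℕ}, F m → (Fin m → A) → Prop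
  | m, .patom p h1 _, v => M.U p (v ⟨m - 1, by omega⟩)
  | _, .batom k, v => M.T k (v 0) (v 1)
  | _, .eqatom, v => v 0 = v 1
  | _, .fls _, _ => False
  | _, .not φ, v => ¬ Sat M φ v
  | _, .and φ ψ, v => Sat M φ v ∧ Sat M ψ v
  | _, .or φ ψ, v => Sat M φ v ∨ Sat M ψ v
  | _, .imp φ ψ, v => Sat M φ v → Sat M ψ v
  | _, .ex _ φ, v => ∃ a : A, Sat M φ (Fin.snoc v a)
  | _, .all _ φ, v => ∀ a : A, Sat M φ (Fin.snoc v a)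

/-- `φ` has a model in which both distinguished binary relations are transitive. -/
def Satisfiable (φ : F 0) : Prop :=
  ∃ (A : Type) (_ : Nonempty A) (M : Str A),
    (∀ k, Transitive (M.T k)) ∧ Sat M φ (fun i => i.elim0)

/-- `φ` has a finite model in which both distinguished binary relations are
transitive. -/
def FinitelySatisfiable (φ : F 0) : Prop :=
  ∃ (A : Type) (_ : Nonempty A) (_ : Finite A) (M : Str A),
    (∀ k, Transitive (M.T k)) ∧ Sat M φ (fun i => i.elim0)

/-- A concrete Gödel numbering of FL²-formulas with equality. -/
def encode : ∀ {m : ℕ}, F m → ℕ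
  | _, .patom p _ _ => Nat.pair 0 p
  | _, .batom k => Nat.pair 1 k.val
  | _, .eqatom => Nat.pair 2 0
  | _, .fls _ => Nat.pair 3 0
  | _, .not φ => Nat.pair 4 (encode φ)
  | _, .and φ ψ => Nat.pair 5 (Nat.pair (encode φ) (encode ψ))
  | _, .or φ ψ => Nat.pair 6 (Nat.pair (encode φ) (encode ψ))
  | _, .imp φ ψ => Nat.pair 7 (Nat.pair (encode φ) (encode ψ))
  | _, .ex _ φ => Nat.pair 8 (encode φ)
  | _, .all _ φ => Nat.pair 9 (encode φ)

/-- A tiling system: a finite set of tiles `Fin n` together with horizontal and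
vertical constraints. -/
structure TileSys where
  n : ℕ
  H : Fin n → Fin n → Bool
  V : Fin n → Fin n → Bool

/-- `𝒞` tiles `ℤ × ℤ`. -/
def TileSys.TilesZ (T : TileSys) : Prop :=
  ∃ ρ : ℤ × ℤ → Fin T.n, ∀ p q : ℤ,
    T.H (ρ (p, q)) (ρ (p + 1, q)) = true ∧ T.V (ρ (p, q)) (ρ (p, q + 1)) = true

/-- `𝒞` tiles the torus `ℤ_t × ℤ_t`. -/
def TileSys.TilesTorus (T : TileSys) (t : ℕ) : Prop :=
  ∃ ρ : ZMod t × ZMod t → Fin T.n, ∀ p q : ZMod t,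
    T.H (ρ (p, q)) (ρ (p + 1, q)) = true ∧ T.V (ρ (p, q)) (ρ (p, q + 1)) = true

/-- A concrete Gödel numbering of tiling systems. -/
def TileSys.encode (T : TileSys) : ℕ :=
  Nat.pair T.n
    (Nat.pair (∑ i : Fin T.n, ∑ j : Fin T.n,
        if T.H i j then 2 ^ (i.val * T.n + j.val) else 0)
      (∑ i : Fin T.n, ∑ j : Fin T.n,
        if T.V i j then 2 ^ (i.val * T.n + j.val) else 0))

/-!
In a model of the sentence, the points of each coordinate type modulo `8` are matched with those of
the neighbouring types by edges lying in one transitive relation in both directions. As no relation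
joins two distinct points of the same type, these matchings are bijections, which assemble into two
permutations of the set of typed points: a step to the right and a step upwards. The two steps
commute because squares close: the sentence forces one orientation of each horizontal edge,
following a zigzag of period `8`, into the relation of the vertical edges, and the composite edge
between the upper corners back into the relation of the horizontal ones. So the tiles along an orbit
tile the plane, and a torus whose period is the number of permutations if the model is finite.

Conversely, a tiling of `ℤ_t × ℤ_t` yields a model on `ZMod N × ZMod N` for any common multiple `N`
of `8` and `t`. The plane is the torus of period `0`, so both equivalences follow from the same
construction.
-/

/-! ### Permutations from matchings -/

section Matching

variable {A : Type*} {R : A → A → Prop} {s t : Set A}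

/-- `R` matches the sets `s` and `t`: each element of either set has an `R`-successor in the
other one. -/
def Matched (R : A → A → Prop) (s t : Set A) : Prop :=
  (∀ x ∈ s, ∃ y ∈ t, R x y) ∧ ∀ y ∈ t, ∃ x ∈ s, R y x

/-- `R` transfers to `S` from `s` to `t`: an `R`-edge leading from `s` to `t` is an `S`-edge. -/
def Transfers (R S : A → A → Prop) (s t : Set A) : Prop :=
  ∀ x ∈ s, ∀ y ∈ t, R x y → S x y

theorem Matched.refl (hR : ∀ x, R x x) (s : Set A) : Matched R s s :=
  ⟨fun x hx => ⟨x, hx, hR x⟩, fun x hx => ⟨x, hx, hR x⟩⟩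

theorem Matched.prod {B : Type*} {S : B → B → Prop} {s' t' : Set B} (h : Matched R s t)
    (h' : Matched S s' t') :
    Matched (fun p q : A × B => R p.1 q.1 ∧ S p.2 q.2) (s ×ˢ s') (t ×ˢ t') := by
  constructor
  · intro p hp
    obtain ⟨⟨x, hx, hpx⟩, y, hy, hpy⟩ := h.1 p.1 hp.1, h'.1 p.2 hp.2
    exact ⟨(x, y), ⟨hx, hy⟩, hpx, hpy⟩
  · intro q hq
    obtain ⟨⟨x, hx, hqx⟩, y, hy, hqy⟩ := h.2 q.1 hq.1, h'.2 q.2 hq.2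
    exact ⟨(x, y), ⟨hx, hy⟩, hqx, hqy⟩

theorem Matched.exists_equiv [IsTrans A R] (h : Matched R s t) (hs : IsAntichain R s)
    (ht : IsAntichain R t) :
    ∃ e : s ≃ t, ∀ (x : s) (y : t), (R x y ↔ e x = y) ∧ (R y x ↔ e x = y) := by
  have forth : ∀ x : s, ∃ y : t, R x y := fun x => by simpa using h.1 x x.2
  have back : ∀ y : t, ∃ x : s, R y x := fun y => by simpa using h.2 y y.2
  choose f hf using forth
  choose g hg using back
  have gf : ∀ x, g (f x) = x := fun x =>
    (Subtype.ext (hs.eq x.2 (g (f x)).2 (_root_.trans (hf x) (hg (f x))))).symm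
  have fg : ∀ y, f (g y) = y := fun y =>
    (Subtype.ext (ht.eq y.2 (f (g y)).2 (_root_.trans (hg y) (hf (g y))))).symm
  have f_symm : ∀ x, R (f x) x := fun x => by simpa only [gf] using hg (f x)
  refine ⟨⟨f, g, gf, fg⟩, fun x y => ⟨⟨fun hxy => ?_, ?_⟩, ⟨fun hyx => ?_, ?_⟩⟩⟩
  · exact Subtype.ext (ht.eq (f x).2 y.2 (_root_.trans (f_symm x) hxy))
  · rintro rfl
    exact hf x
  · exact (Subtype.ext (ht.eq y.2 (f x).2 (_root_.trans hyx (hf x)))).symm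
  · rintro rfl
    exact f_symm x

end Matching

/-! ### Tilings along the orbits of two commuting permutations -/

/-- A labelling `τ` of a set with two permutations `h` and `v` that induces a tiling on every
orbit: `h` plays the role of the step to the right and `v` that of the step upwards. -/
structure TileSys.IsOrbitTiling (𝒞 : TileSys) {B : Type*} (h v : Equiv.Perm B)
    (τ : B → Fin 𝒞.n) : Prop where
  commute : Commute h v
  hor : ∀ b, 𝒞.H (τ b) (τ (h b)) = true
  ver : ∀ b, 𝒞.V (τ b) (τ (v b)) = true

theorem zpow_zmodCast_add_one {G : Type*} [Group G] {g : G} {t : ℕ} (hg : g ^ t = 1)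
    (p : ZMod t) : g ^ ((p + 1).cast : ℤ) = g * g ^ (p.cast : ℤ) := by
  have hmod : ((p + 1).cast : ℤ) ≡ 1 + p.cast [ZMOD t] := by
    rw [← ZMod.intCast_eq_intCast_iff]
    simp [add_comm]
  rw [← zpow_one_add, zpow_eq_zpow_iff_modEq]
  exact hmod.of_dvd (Int.natCast_dvd_natCast.mpr (orderOf_dvd_of_pow_eq_one hg))

theorem TileSys.IsOrbitTiling.tilesTorus {𝒞 : TileSys} {B : Type*} {h v : Equiv.Perm B}
    {τ : B → Fin 𝒞.n} (hτ : 𝒞.IsOrbitTiling h v τ) (b : B) {t : ℕ} (ht : h ^ t = 1)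
    (vt : v ^ t = 1) : 𝒞.TilesTorus t := by
  refine ⟨fun w => τ ((h ^ (w.1.cast : ℤ) * v ^ (w.2.cast : ℤ)) b), fun p q => ⟨?_, ?_⟩⟩
  · simp only [zpow_zmodCast_add_one ht, mul_assoc]
    exact hτ.hor _
  · simp only [zpow_zmodCast_add_one vt]
    rw [← mul_assoc, (hτ.commute.zpow_left _).eq, mul_assoc]
    exact hτ.ver _

/-! ### Tiled grids -/

/-- The coordinates of a grid point modulo `8`. -/
abbrev Cell : Type := ZMod 8 × ZMod 8

/-- The index of the distinguished relation carrying the grid edge from coordinate `i` to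
coordinate `i + 1`. -/
def par (i : ZMod 8) : Fin 2 := Fin.ofNat 2 i.val

/-- The source of the edge between columns `i` and `i + 1`, which is oriented so as to lie in both
distinguished relations: the columns form the zigzag `0 → 1 ← 2 ← 3 → 4 → 5 ← 6 ← 7 → 0`. -/
def src (i : ZMod 8) : ZMod 8 := if i.val % 4 = 1 ∨ i.val % 4 = 2 then i + 1 else i

/-- The target of the edge between columns `i` and `i + 1`, oriented as in `src`. -/
def tgt (i : ZMod 8) : ZMod 8 := if i.val % 4 = 1 ∨ i.val % 4 = 2 then i else i + 1

/-- The first-order description of a grid whose points are typed by their coordinates modulo `8`,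
with edges in the relations `T`. The fields `lower` and `upper` make squares close: they let the
lower edge of a square be traversed in the relation of its vertical edges, and bring the resulting
edge between its upper corners back into the relation of its horizontal edges. -/
structure IsGrid {A : Type*} (U : Cell → Set A) (T : Fin 2 → A → A → Prop) :
    Prop where
  nonempty : (U (0, 0)).Nonempty
  antichain : ∀ (w : Cell) k, IsAntichain (T k) (U w)
  right : ∀ w : Cell, Matched (T (par w.1)) (U w) (U (w.1 + 1, w.2))
  up : ∀ w : Cell, Matched (T (par w.2)) (U w) (U (w.1, w.2 + 1))
  lower : ∀ w : Cell, Transfers (T (par w.1)) (T (par w.2)) (U (src w.1, w.2)) (U (tgt w.1, w.2))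
  upper : ∀ w : Cell,
    Transfers (T (par w.2)) (T (par w.1)) (U (src w.1, w.2 + 1)) (U (tgt w.1, w.2 + 1))

/-- A pair of tiles carried by an edge of `R` from `s` to `t` satisfies the constraint `C`; the
set `P c` consists of the points carrying the tile `c`. -/
def RespectsConstraint {A ι : Type*} (C : ι → ι → Bool) (P : ι → Set A) (R : A → A → Prop)
    (s t : Set A) : Prop :=
  ∀ c d, C c d = false → ∀ x ∈ s, x ∈ P c → ∀ y ∈ t, R x y → y ∉ P d

/-- A grid all of whose points carry tiles of `𝒞` in accordance with its constraints. -/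
structure TileSys.IsTiledGrid (𝒞 : TileSys) {A : Type*} (U : Cell → Set A)
    (T : Fin 2 → A → A → Prop) (P : Fin 𝒞.n → Set A) : Prop extends IsGrid U T where
  cover : ∀ x, ∃ c, x ∈ P c
  hor : ∀ w : Cell, RespectsConstraint 𝒞.H P (T (par w.1)) (U w) (U (w.1 + 1, w.2))
  ver : ∀ w : Cell, RespectsConstraint 𝒞.V P (T (par w.2)) (U w) (U (w.1, w.2 + 1))

theorem RespectsConstraint.eq_true {A ι : Type*} {C : ι → ι → Bool} {P : ι → Set A}
    {R : A → A → Prop} {s t : Set A} (h : RespectsConstraint C P R s t) {c c' : ι} {x y : A}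
    (hx : x ∈ s) (hy : y ∈ t) (hxy : R x y) (hc : x ∈ P c) (hc' : y ∈ P c') : C c c' = true :=
  Bool.of_not_eq_false fun hC => h c c' hC x hx hc y hy hxy hc'

section Grid

variable {A : Type*} {U : Cell → Set A} {T : Fin 2 → A → A → Prop}
  [∀ k, IsTrans A (T k)]

theorem IsGrid.square_closes (G : IsGrid U T) {i j : ZMod 8}
    {a b c d : A} (ha : a ∈ U (i, j)) (hb : b ∈ U (i + 1, j)) (hc : c ∈ U (i, j + 1))
    (hd : d ∈ U (i + 1, j + 1)) (hab : T (par i) a b ∧ T (par i) b a)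
    (hac : T (par j) a c ∧ T (par j) c a) (hbd : T (par j) b d ∧ T (par j) d b) :
    T (par i) c d ∨ T (par i) d c := by
  have lower := G.lower (i, j)
  have upper := G.upper (i, j)
  simp only [src, tgt] at lower upper
  split_ifs at lower upper
  · have hba : T (par j) b a := lower b hb a ha hab.2
    exact .inr (upper d hd c hc (_root_.trans hbd.2 (_root_.trans hba hac.1)))
  · have hab' : T (par j) a b := lower a ha b hb hab.1
    exact .inl (upper c hc d hd (_root_.trans hac.2 (_root_.trans hab' hbd.1)))

theorem IsGrid.exists_commuting_perms (G : IsGrid U T) :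
    ∃ h v : Equiv.Perm (Σ w, U w), Commute h v ∧
      (∀ b, (h b).1 = (b.1.1 + 1, b.1.2) ∧ T (par b.1.1) b.2 (h b).2) ∧
      ∀ b, (v b).1 = (b.1.1, b.1.2 + 1) ∧ T (par b.1.2) b.2 (v b).2 := by
  choose r hr using fun w : Cell => (G.right w).exists_equiv (G.antichain w _) (G.antichain _ _)
  choose u hu using fun w : Cell => (G.up w).exists_equiv (G.antichain w _) (G.antichain _ _)
  have r_edge : ∀ w (x : U w), T (par w.1) x (r w x) ∧ T (par w.1) (r w x) x := fun w x =>
    ⟨(hr w x _).1.mpr rfl, (hr w x _).2.mpr rfl⟩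
  have u_edge : ∀ w (x : U w), T (par w.2) x (u w x) ∧ T (par w.2) (u w x) x := fun w x =>
    ⟨(hu w x _).1.mpr rfl, (hu w x _).2.mpr rfl⟩
  have comm : ∀ w (x : U w), r (w.1, w.2 + 1) (u w x) = u (w.1 + 1, w.2) (r w x) := by
    intro w x
    obtain h | h := G.square_closes x.2 (r w x).2 (u w x).2 (u (w.1 + 1, w.2) (r w x)).2
      (r_edge w x) (u_edge w x) (u_edge (w.1 + 1, w.2) (r w x))
    · exact (hr (w.1, w.2 + 1) _ _).1.mp h
    · exact (hr (w.1, w.2 + 1) _ _).2.mp h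
  let right : Equiv.Perm (Cell) := (Equiv.addRight 1).prodCongr (Equiv.refl _)
  let up : Equiv.Perm (Cell) := (Equiv.refl _).prodCongr (Equiv.addRight 1)
  refine ⟨right.sigmaCongr r, up.sigmaCongr u, Equiv.ext fun ⟨w, x⟩ => ?_,
    fun b => ⟨rfl, (r_edge b.1 b.2).1⟩, fun b => ⟨rfl, (u_edge b.1 b.2).1⟩⟩
  exact congrArg (Sigma.mk (β := fun w => U w) (w.1 + 1, w.2 + 1)) (comm w x)

theorem TileSys.IsTiledGrid.exists_isOrbitTiling {𝒞 : TileSys} {P : Fin 𝒞.n → Set A}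
    (G : 𝒞.IsTiledGrid U T P) :
    ∃ (h v : Equiv.Perm (Σ w, U w)) (τ : (Σ w, U w) → Fin 𝒞.n), 𝒞.IsOrbitTiling h v τ := by
  obtain ⟨h, v, comm, hh, hv⟩ := G.exists_commuting_perms
  choose τ hτ using G.cover
  refine ⟨h, v, fun b => τ b.2, comm, fun b => ?_, fun b => ?_⟩
  · exact (G.hor b.1).eq_true b.2.2 ((hh b).1 ▸ (h b).2.2) (hh b).2 (hτ _) (hτ _)
  · exact (G.ver b.1).eq_true b.2.2 ((hv b).1 ▸ (v b).2.2) (hv b).2 (hτ _) (hτ _)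

theorem TileSys.IsTiledGrid.tilesZ {𝒞 : TileSys} {P : Fin 𝒞.n → Set A}
    (G : 𝒞.IsTiledGrid U T P) : 𝒞.TilesZ := by
  obtain ⟨h, v, τ, hτ⟩ := G.exists_isOrbitTiling
  obtain ⟨x, hx⟩ := G.nonempty
  exact hτ.tilesTorus ⟨(0, 0), x, hx⟩ (pow_zero h) (pow_zero v)

theorem TileSys.IsTiledGrid.exists_tilesTorus [Finite A] {𝒞 : TileSys} {P : Fin 𝒞.n → Set A}
    (G : 𝒞.IsTiledGrid U T P) : ∃ t, 1 ≤ t ∧ 𝒞.TilesTorus t := by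
  obtain ⟨h, v, τ, hτ⟩ := G.exists_isOrbitTiling
  obtain ⟨x, hx⟩ := G.nonempty
  exact ⟨Nat.card (Equiv.Perm (Σ w, U w)), Nat.card_pos,
    hτ.tilesTorus ⟨(0, 0), x, hx⟩ pow_card_eq_one' pow_card_eq_one'⟩

end Grid

/-! ### The intended model -/

section Zigzag

variable {k l : Fin 2} {a b c : ℤ}

/-- The relation `k` of the intended model along one axis. The integers are cut into blocks of two,
beginning at the integers of parity `k`; each block is a clique, and every other block points to
both of its neighbours. -/
def Zigzag (k : Fin 2) (a b : ℤ) : Prop :=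
  (a - k.val) / 2 = (b - k.val) / 2 ∨
    (a - k.val) / 2 % 2 = 1 ∧
      ((b - k.val) / 2 = (a - k.val) / 2 + 1 ∨ (b - k.val) / 2 = (a - k.val) / 2 - 1)

theorem Zigzag.refl (k : Fin 2) (a : ℤ) : Zigzag k a a :=
  .inl rfl

theorem Zigzag.trans (hab : Zigzag k a b) (hbc : Zigzag k b c) : Zigzag k a c := by
  unfold Zigzag at *
  omega

theorem Zigzag.add_eight_mul (h : Zigzag k a b) (m : ℤ) :
    Zigzag k (a + 8 * m) (b + 8 * m) := by
  unfold Zigzag at *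
  omega

theorem Zigzag.eq_add_of_modEq (h : Zigzag k a b) {e : ℤ} (he : e = 0 ∨ e = 1)
    (hb : b ≡ a + e [ZMOD 8]) : b = a + e := by
  unfold Zigzag Int.ModEq at *
  omega

theorem zigzag_add_one (h : (k.val : ℤ) = a % 2) :
    Zigzag k a (a + 1) ∧ Zigzag k (a + 1) a := by
  unfold Zigzag
  omega

theorem Zigzag.of_src_tgt (h : Zigzag k a b) {i : ZMod 8} (ha : (a : ZMod 8) = src i)
    (hb : (b : ZMod 8) = tgt i) : Zigzag l a b := by
  obtain ⟨n, rfl⟩ := ZMod.intCast_surjective i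
  have val : ((n : ZMod 8).val : ℤ) = n % 8 := ZMod.val_intCast n
  have hk := k.isLt
  have hl := l.isLt
  unfold src at ha
  unfold tgt at hb
  unfold Zigzag at *
  split_ifs at ha hb <;> norm_cast at ha hb <;> rw [ZMod.intCast_eq_intCast_iff'] at ha hb <;> omega

end Zigzag

section CyclicZigzag

variable {N : ℕ} {k l : Fin 2} {x y : ZMod N}

/-- The image of `Zigzag k` in `ZMod N`, meaningful when `8 ∣ N`. -/
def CyclicZigzag (N : ℕ) (k : Fin 2) : ZMod N → ZMod N → Prop :=
  Relation.Map (Zigzag k) Int.cast Int.cast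

theorem CyclicZigzag.exists_lift (hN : 8 ∣ N) {a : ℤ} (h : CyclicZigzag N k a y) :
    ∃ b : ℤ, Zigzag k a b ∧ (b : ZMod N) = y := by
  obtain ⟨a', b, hab, ha, rfl⟩ := h
  have hdvd : (8 : ℤ) ∣ a - a' := (Int.natCast_dvd_natCast.mpr hN).trans
    ((ZMod.intCast_eq_intCast_iff_dvd_sub a' a N).mp ha)
  obtain ⟨m, hm⟩ := hdvd
  refine ⟨b + (a - a'), ?_, by simp [ha]⟩
  simpa [← hm] using hab.add_eight_mul m

theorem CyclicZigzag.isTrans (hN : 8 ∣ N) (k : Fin 2) : IsTrans (ZMod N) (CyclicZigzag N k) where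
  trans := by
    rintro _ _ z ⟨a, b, hab, rfl, rfl⟩ hbz
    obtain ⟨c, hbc, rfl⟩ := hbz.exists_lift hN
    exact ⟨a, c, hab.trans hbc, rfl, rfl⟩

theorem CyclicZigzag.refl (k : Fin 2) (x : ZMod N) : CyclicZigzag N k x x := by
  obtain ⟨a, rfl⟩ := ZMod.intCast_surjective x
  exact ⟨a, a, .refl k a, rfl, rfl⟩

/-- The residue class of `i` modulo `8` in `ZMod N`. -/
def residueClass (hN : 8 ∣ N) (i : ZMod 8) : Set (ZMod N) :=
  {x | ZMod.castHom hN (ZMod 8) x = i}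

variable {hN : 8 ∣ N} {i : ZMod 8}

theorem add_one_mem_residueClass_iff : x + 1 ∈ residueClass hN (i + 1) ↔ x ∈ residueClass hN i := by
  simp only [residueClass, Set.mem_ofPred_eq, map_add, map_one, add_left_inj]

theorem CyclicZigzag.eq_add_of_mem (h : CyclicZigzag N k x y) {e : ℤ} (he : e = 0 ∨ e = 1)
    (hx : x ∈ residueClass hN i) (hy : y ∈ residueClass hN (i + e)) : y = x + e := by
  obtain ⟨a, b, hab, rfl, rfl⟩ := h
  cases hx
  have hmod : (b : ZMod 8) = (a + e : ℤ) := by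
    rwa [← map_intCast (ZMod.castHom hN (ZMod 8)) b, Int.cast_add,
      ← map_intCast (ZMod.castHom hN (ZMod 8)) a]
  rw [hab.eq_add_of_modEq he ((ZMod.intCast_eq_intCast_iff _ _ 8).mp hmod), Int.cast_add]

theorem CyclicZigzag.eq_of_mem (h : CyclicZigzag N k x y) (hx : x ∈ residueClass hN i)
    (hy : y ∈ residueClass hN i) : y = x := by
  simpa using h.eq_add_of_mem (.inl rfl) hx (by simpa using hy)

theorem CyclicZigzag.eq_add_one_of_mem (h : CyclicZigzag N k x y) (hx : x ∈ residueClass hN i)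
    (hy : y ∈ residueClass hN (i + 1)) : y = x + 1 := by
  simpa using h.eq_add_of_mem (.inr rfl) hx (by simpa using hy)

theorem CyclicZigzag.of_src_tgt (h : CyclicZigzag N k x y) (hx : x ∈ residueClass hN (src i))
    (hy : y ∈ residueClass hN (tgt i)) : CyclicZigzag N l x y := by
  obtain ⟨a, b, hab, rfl, rfl⟩ := h
  exact ⟨a, b, hab.of_src_tgt ((map_intCast _ a).symm.trans hx) ((map_intCast _ b).symm.trans hy),
    rfl, rfl⟩

theorem cyclicZigzag_add_one (hx : x ∈ residueClass hN i) :
    CyclicZigzag N (par i) x (x + 1) ∧ CyclicZigzag N (par i) (x + 1) x := by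
  obtain ⟨a, rfl⟩ := ZMod.intCast_surjective x
  obtain rfl : (a : ZMod 8) = i := (map_intCast _ a).symm.trans hx
  have hpar : ((par (a : ZMod 8)).val : ℤ) = a % 2 := by
    have val : ((a : ZMod 8).val : ℤ) = a % 8 := ZMod.val_intCast a
    simp only [par, Fin.ofNat]
    omega
  rw [← Int.cast_one, ← Int.cast_add]
  exact ⟨⟨a, a + 1, (zigzag_add_one hpar).1, rfl, rfl⟩, a + 1, a, (zigzag_add_one hpar).2, rfl, rfl⟩

theorem residueClass_matched_add_one (hN : 8 ∣ N) (i : ZMod 8) :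
    Matched (CyclicZigzag N (par i)) (residueClass hN i) (residueClass hN (i + 1)) := by
  refine ⟨fun x hx => ⟨x + 1, add_one_mem_residueClass_iff.mpr hx, (cyclicZigzag_add_one hx).1⟩,
    fun y hy => ?_⟩
  obtain ⟨x, rfl⟩ : ∃ x, x + 1 = y := ⟨y - 1, sub_add_cancel y 1⟩
  have hx : x ∈ residueClass hN i := add_one_mem_residueClass_iff.mp hy
  exact ⟨x, hx, (cyclicZigzag_add_one hx).2⟩

end CyclicZigzag

section Model

variable {N : ℕ}

/-- The relations of the intended model on `ZMod N × ZMod N`, where `N = 0` gives the plane. -/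
def modelRel (N : ℕ) (k : Fin 2) (p q : ZMod N × ZMod N) : Prop :=
  CyclicZigzag N k p.1 q.1 ∧ CyclicZigzag N k p.2 q.2

/-- The points of the intended model with coordinates `w` modulo `8`. -/
def modelCell (hN : 8 ∣ N) (w : Cell) : Set (ZMod N × ZMod N) :=
  residueClass hN w.1 ×ˢ residueClass hN w.2

theorem modelRel_isTrans (hN : 8 ∣ N) (k : Fin 2) : IsTrans (ZMod N × ZMod N) (modelRel N k) where
  trans _ _ _ h h' :=
    ⟨(CyclicZigzag.isTrans hN k).trans _ _ _ h.1 h'.1,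
      (CyclicZigzag.isTrans hN k).trans _ _ _ h.2 h'.2⟩

theorem modelRel_transfers (hN : 8 ∣ N) (k l : Fin 2) (i j : ZMod 8) :
    Transfers (modelRel N k) (modelRel N l) (modelCell hN (src i, j)) (modelCell hN (tgt i, j)) :=
  fun p hp _ hq h => ⟨h.1.of_src_tgt hp.1 hq.1, h.2.eq_of_mem hp.2 hq.2 ▸ .refl l p.2⟩

theorem modelCell_isGrid (hN : 8 ∣ N) : IsGrid (modelCell hN) (modelRel N) where
  nonempty := ⟨0, map_zero _, map_zero _⟩
  antichain _ _ _ hp _ hq hne h :=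
    hne (Prod.ext (h.1.eq_of_mem hp.1 hq.1) (h.2.eq_of_mem hp.2 hq.2)).symm
  right w := (residueClass_matched_add_one hN w.1).prod (.refl (CyclicZigzag.refl _) _)
  up w := .prod (.refl (CyclicZigzag.refl _) _) (residueClass_matched_add_one hN w.2)
  lower _ := modelRel_transfers hN _ _ _ _
  upper _ := modelRel_transfers hN _ _ _ _

theorem modelCell_isTiledGrid {𝒞 : TileSys} {t : ℕ} {ρ : ZMod t × ZMod t → Fin 𝒞.n}
    (hρ : ∀ p q, 𝒞.H (ρ (p, q)) (ρ (p + 1, q)) = true ∧ 𝒞.V (ρ (p, q)) (ρ (p, q + 1)) = true)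
    (hN : 8 ∣ N) (ht : t ∣ N) :
    𝒞.IsTiledGrid (modelCell hN) (modelRel N)
      (fun c => {p | ρ (ZMod.castHom ht _ p.1, ZMod.castHom ht _ p.2) = c}) where
  toIsGrid := modelCell_isGrid hN
  cover _ := ⟨_, rfl⟩
  hor w := by
    rintro _ _ hC p hp rfl q hq h rfl
    have right : q = (p.1 + 1, p.2) :=
      Prod.ext (h.1.eq_add_one_of_mem hp.1 hq.1) (h.2.eq_of_mem hp.2 hq.2)
    simp only [right, map_add, map_one, hρ, Bool.true_eq_false] at hC
  ver w := by
    rintro _ _ hC p hp rfl q hq h rfl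
    have up : q = (p.1, p.2 + 1) :=
      Prod.ext (h.1.eq_of_mem hp.1 hq.1) (h.2.eq_add_one_of_mem hp.2 hq.2)
    simp only [up, map_add, map_one, hρ, Bool.true_eq_false] at hC

end Model

/-! ### The sentence of a tiling system -/

namespace F

/-- The true formula. -/
def top {m : ℕ} (h : m ≤ 2) : F m :=
  .not (.fls h)

/-- The conjunction of a list of formulas. -/
def conj {m : ℕ} (h : m ≤ 2) (l : List (F m)) : F m :=
  l.foldr .and (top h)

/-- The sentence `∃ x, p x`. -/
def existsPred (p : ℕ) : F 0 :=
  .ex zero_le_one (.patom p le_rfl one_le_two)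

/-- The sentence `∀ x, p x → ∃ y, q y ∧ T k x y`. -/
def forth (k : Fin 2) (p q : ℕ) : F 0 :=
  .all zero_le_one (.imp (.patom p le_rfl one_le_two)
    (.ex le_rfl (.and (.patom q one_le_two le_rfl) (.batom k))))

/-- The sentence `∀ x, φ x → ∀ y, q y → T k x y → ψ x y`, in the guarded shape that keeps it
fluted. -/
def forallEdge (k : Fin 2) (φ : F 1) (q : ℕ) (ψ : F 2) : F 0 :=
  .all zero_le_one (.imp φ
    (.all le_rfl (.imp (.patom q one_le_two le_rfl) (.imp (.batom k) ψ))))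

/-- The sentence saying that `T k` is an antichain on `p`. -/
def antichain (k : Fin 2) (p : ℕ) : F 0 :=
  forallEdge k (.patom p le_rfl one_le_two) p .eqatom

/-- The sentence saying that `T k` transfers to `T l` from `p` to `q`. -/
def transfer (k l : Fin 2) (p q : ℕ) : F 0 :=
  forallEdge k (.patom p le_rfl one_le_two) q (.batom l)

/-- The sentence saying that `T k` has no edge from `p ∧ c` to `q ∧ c'`. -/
def forbid (k : Fin 2) (p q c c' : ℕ) : F 0 :=
  forallEdge k (.and (.patom p le_rfl one_le_two) (.patom c le_rfl one_le_two)) q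
    (.not (.patom c' one_le_two le_rfl))

end F

/-- The set defined by the unary predicate `p`. -/
def Str.pred {A : Type} (M : Str A) (p : ℕ) : Set A :=
  {x | M.U p x}

section Sat

variable {A : Type} {M : Str A} {v : Fin 0 → A} {k l : Fin 2} {p q c c' : ℕ}

theorem sat_conj {m : ℕ} {h : m ≤ 2} {L : List (F m)} {u : Fin m → A} :
    Sat M (.conj h L) u ↔ ∀ φ ∈ L, Sat M φ u := by
  induction L with
  | nil => simp [F.conj, F.top, Sat]
  | cons φ L ih => simpa [F.conj, Sat] using fun _ => ih

theorem sat_existsPred : Sat M (.existsPred p) v ↔ (M.pred p).Nonempty :=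
  Iff.rfl

theorem sat_forth : Sat M (.forth k p q) v ↔ ∀ x ∈ M.pred p, ∃ y ∈ M.pred q, M.T k x y :=
  Iff.rfl

theorem sat_antichain : Sat M (.antichain k p) v ↔ IsAntichain (M.T k) (M.pred p) :=
  forall₄_congr fun _ _ _ _ => not_imp_not.symm

theorem sat_transfer :
    Sat M (.transfer k l p q) v ↔ Transfers (M.T k) (M.T l) (M.pred p) (M.pred q) :=
  Iff.rfl

theorem sat_forbid :
    Sat M (.forbid k p q c c') v ↔
      ∀ x, x ∈ M.pred p ∧ x ∈ M.pred c → ∀ y ∈ M.pred q, M.T k x y → y ∉ M.pred c' :=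
  Iff.rfl

end Sat

/-- The unary predicate of the points with coordinates `w`. -/
def cellPred (w : Cell) : ℕ :=
  Nat.pair 0 (Nat.pair w.1.val w.2.val)

/-- The unary predicate of the points carrying the tile `c`. -/
def tilePred (c : ℕ) : ℕ :=
  Nat.pair 1 c

namespace F

/-- The conjunct of `grid` concerning the points with coordinates `w`. -/
def gridAt (w : Cell) : F 0 :=
  conj zero_le_two
    [antichain 0 (cellPred w), antichain 1 (cellPred w),
      forth (par w.1) (cellPred w) (cellPred (w.1 + 1, w.2)),
      forth (par w.1) (cellPred (w.1 + 1, w.2)) (cellPred w),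
      forth (par w.2) (cellPred w) (cellPred (w.1, w.2 + 1)),
      forth (par w.2) (cellPred (w.1, w.2 + 1)) (cellPred w),
      transfer (par w.1) (par w.2) (cellPred (src w.1, w.2)) (cellPred (tgt w.1, w.2)),
      transfer (par w.2) (par w.1) (cellPred (src w.1, w.2 + 1)) (cellPred (tgt w.1, w.2 + 1))]

/-- The conjunction of `φ w` over all coordinates `w`. -/
noncomputable def forallCell (φ : Cell → F 0) : F 0 :=
  conj zero_le_two (Finset.univ.toList.map φ)

/-- The sentence expressing `IsGrid`. -/
noncomputable def grid : F 0 :=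
  .and (existsPred (cellPred (0, 0))) (forallCell gridAt)

/-- The sentence saying that each point carries one of `n` tiles. -/
def cover (n : ℕ) : F 0 :=
  .all zero_le_one (.not (conj one_le_two
    ((List.range n).map fun c => .not (.patom (tilePred c) le_rfl one_le_two))))

/-- The sentence expressing `RespectsConstraint` for the constraint on `n` tiles whose matrix has
the binary digits of `a` as its entries, listed row by row. -/
def constraint (n a : ℕ) (k : Fin 2) (p q : ℕ) : F 0 :=
  conj zero_le_two ((List.range (n * n)).map fun m =>
    if a.testBit m then top zero_le_two else forbid k p q (tilePred (m / n)) (tilePred (m % n)))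

/-- The sentence of the tiling system with `n` tiles whose horizontal and vertical constraints are
given by the binary digits of `a` and `b`. -/
noncomputable def tiling (n a b : ℕ) : F 0 :=
  .and grid (.and (cover n) (.and
    (forallCell fun w => constraint n a (par w.1) (cellPred w) (cellPred (w.1 + 1, w.2)))
    (forallCell fun w => constraint n b (par w.2) (cellPred w) (cellPred (w.1, w.2 + 1)))))

end F

/-- The number whose binary digits are the entries of the matrix `C`, listed row by row. -/
def constraintBits {n : ℕ} (C : Fin n → Fin n → Bool) : ℕ :=
  ∑ i : Fin n, ∑ j : Fin n, if C i j then 2 ^ (i.val * n + j.val) else 0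

theorem testBit_sum_two_pow {ι : Type*} [Fintype ι] {f : ι → ℕ} (hf : Function.Injective f)
    (b : ι → Bool) (i : ι) : (∑ j, if b j then 2 ^ f j else 0).testBit (f i) = b i := by
  have hsum : (∑ j, if b j then 2 ^ f j else 0) =
      ∑ m ∈ (Finset.univ.filter fun j => b j = true).map ⟨f, hf⟩, 2 ^ m := by
    rw [Finset.sum_map, Finset.sum_filter]
    rfl
  rw [Bool.eq_iff_iff, ← Nat.mem_bitIndices, ← List.mem_toFinset, hsum,
    Finset.toFinset_bitIndices_sum_two_pow]
  simp

theorem forall_lt_mul_self_iff {n : ℕ} {Q : ℕ → Prop} :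
    (∀ m < n * n, Q m) ↔ ∀ i j : Fin n, Q (finProdFinEquiv (i, j)).val :=
  (Fin.forall_iff (p := fun m : Fin (n * n) => Q m)).symm.trans
    (finProdFinEquiv.forall_congr_right.symm.trans Prod.forall)

theorem constraintBits_testBit {n : ℕ} (C : Fin n → Fin n → Bool) (i j : Fin n) :
    (constraintBits C).testBit (finProdFinEquiv (i, j)) = C i j := by
  have hf : Function.Injective fun w : Fin n × Fin n => (finProdFinEquiv w).val :=
    Fin.val_injective.comp finProdFinEquiv.injective
  rw [← testBit_sum_two_pow hf (fun w => C w.1 w.2) (i, j), constraintBits,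
    ← Fintype.sum_prod_type']
  simp [mul_comm, add_comm]

section Sat

variable {A : Type} {M : Str A} {v : Fin 0 → A} {n : ℕ}

theorem sat_forallCell {φ : Cell → F 0} : Sat M (.forallCell φ) v ↔ ∀ w, Sat M (φ w) v := by
  simp only [F.forallCell, sat_conj, List.forall_mem_map, Finset.mem_toList, Finset.mem_univ,
    true_imp_iff]

theorem sat_gridAt {w : Cell} :
    Sat M (.gridAt w) v ↔
      (∀ k, IsAntichain (M.T k) (M.pred (cellPred w))) ∧
      Matched (M.T (par w.1)) (M.pred (cellPred w)) (M.pred (cellPred (w.1 + 1, w.2))) ∧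
      Matched (M.T (par w.2)) (M.pred (cellPred w)) (M.pred (cellPred (w.1, w.2 + 1))) ∧
      Transfers (M.T (par w.1)) (M.T (par w.2)) (M.pred (cellPred (src w.1, w.2)))
        (M.pred (cellPred (tgt w.1, w.2))) ∧
      Transfers (M.T (par w.2)) (M.T (par w.1)) (M.pred (cellPred (src w.1, w.2 + 1)))
        (M.pred (cellPred (tgt w.1, w.2 + 1))) := by
  simp only [F.gridAt, sat_conj, List.forall_mem_cons, sat_antichain, sat_forth, sat_transfer,
    Matched, Fin.forall_fin_two, and_assoc, List.not_mem_nil, false_imp_iff, implies_true, and_true]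

theorem sat_grid : Sat M .grid v ↔ IsGrid (fun w => M.pred (cellPred w)) M.T := by
  simp only [F.grid, Sat, sat_existsPred, sat_forallCell, sat_gridAt]
  exact ⟨fun ⟨h₀, h⟩ => ⟨h₀, fun w => (h w).1, fun w => (h w).2.1, fun w => (h w).2.2.1,
      fun w => (h w).2.2.2.1, fun w => (h w).2.2.2.2⟩,
    fun G => ⟨G.nonempty, fun w => ⟨G.antichain w, G.right w, G.up w, G.lower w, G.upper w⟩⟩⟩

theorem sat_cover : Sat M (.cover n) v ↔ ∀ x, ∃ c : Fin n, x ∈ M.pred (tilePred c) := by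
  refine forall_congr' fun x => ?_
  have hx : Sat M (.conj one_le_two
      ((List.range n).map fun c => .not (.patom (tilePred c) le_rfl one_le_two)))
      (Fin.snoc v x) ↔ ∀ c < n, x ∉ M.pred (tilePred c) := by
    simp only [sat_conj, List.forall_mem_map, List.mem_range]
    rfl
  refine (not_congr hx).trans ?_
  simp [Fin.exists_iff]

theorem sat_ite_top {b : Bool} {φ : F 0} :
    Sat M (if b then .top zero_le_two else φ) v ↔ (b = false → Sat M φ v) := by
  cases b <;> simp [F.top, Sat]

theorem sat_constraint {C : Fin n → Fin n → Bool} {k : Fin 2} {p q : ℕ} :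
    Sat M (.constraint n (constraintBits C) k p q) v ↔
      RespectsConstraint C (fun c => M.pred (tilePred c)) (M.T k) (M.pred p) (M.pred q) := by
  simp only [F.constraint, sat_conj, List.forall_mem_map, List.mem_range, sat_ite_top, sat_forbid]
  rw [forall_lt_mul_self_iff]
  refine forall₂_congr fun c c' => ?_
  have hdiv : (finProdFinEquiv (c, c')).val / n = c :=
    congrArg (·.1.val) (finProdFinEquiv.symm_apply_apply (c, c'))
  have hmod : (finProdFinEquiv (c, c')).val % n = c' :=
    congrArg (·.2.val) (finProdFinEquiv.symm_apply_apply (c, c'))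
  rw [constraintBits_testBit, hdiv, hmod]
  simp only [and_imp]

theorem sat_tiling {𝒞 : TileSys} :
    Sat M (.tiling 𝒞.n (constraintBits 𝒞.H) (constraintBits 𝒞.V)) v ↔
      𝒞.IsTiledGrid (fun w => M.pred (cellPred w)) M.T (fun c => M.pred (tilePred c)) := by
  simp only [F.tiling, Sat, sat_grid, sat_cover, sat_forallCell, sat_constraint]
  exact ⟨fun ⟨hG, hc, hh, hv⟩ => ⟨hG, hc, hh, hv⟩, fun h => ⟨h.toIsGrid, h.cover, h.hor, h.ver⟩⟩

end Sat

section Satisfiability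

/-- The structure with the relations `T` in which the sets `U` interpret the predicates of the
coordinates and the sets `P` those of the tiles. -/
def gridStr {A : Type} {n : ℕ} (U : Cell → Set A) (T : Fin 2 → A → A → Prop)
    (P : Fin n → Set A) : Str A where
  U p x := (∃ w, p = cellPred w ∧ x ∈ U w) ∨ ∃ c : Fin n, p = tilePred c ∧ x ∈ P c
  T := T

section GridStr

variable {A : Type} {n : ℕ} {U : Cell → Set A} {T : Fin 2 → A → A → Prop} {P : Fin n → Set A}

theorem cellPred_injective : Function.Injective cellPred := fun w w' h => by
  simp only [cellPred, Nat.pair_eq_pair, true_and] at h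
  exact Prod.ext (ZMod.val_injective 8 h.1) (ZMod.val_injective 8 h.2)

theorem gridStr_pred_cellPred (w : Cell) : (gridStr U T P).pred (cellPred w) = U w := by
  ext x
  have hne : ∀ c, cellPred w ≠ tilePred c := by simp [cellPred, tilePred, Nat.pair_eq_pair]
  simp only [Str.pred, gridStr, cellPred_injective.eq_iff, hne, Set.mem_ofPred_eq,
    exists_eq_left', false_and, exists_false, or_false]

theorem gridStr_pred_tilePred (c : Fin n) : (gridStr U T P).pred (tilePred c) = P c := by
  ext x
  have hne : ∀ w, tilePred c ≠ cellPred w := by simp [cellPred, tilePred, Nat.pair_eq_pair]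
  simp only [Str.pred, gridStr, hne, Set.mem_ofPred_eq, false_and, exists_false, false_or]
  simp [tilePred, Nat.pair_eq_pair, Fin.val_inj]

theorem TileSys.IsTiledGrid.sat_tiling {𝒞 : TileSys} {P : Fin 𝒞.n → Set A}
    (G : 𝒞.IsTiledGrid U T P) (v : Fin 0 → A) :
    Sat (gridStr U T P) (.tiling 𝒞.n (constraintBits 𝒞.H) (constraintBits 𝒞.V)) v := by
  rw [FlutedTwoTransEq.sat_tiling]
  simp only [gridStr_pred_cellPred, gridStr_pred_tilePred]
  exact G

end GridStr

theorem TileSys.TilesTorus.exists_model {𝒞 : TileSys} {t N : ℕ} (h : 𝒞.TilesTorus t)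
    (hN : 8 ∣ N) (ht : t ∣ N) :
    ∃ M : Str (ZMod N × ZMod N), (∀ k, IsTrans _ (M.T k)) ∧
      ∀ v, Sat M (.tiling 𝒞.n (constraintBits 𝒞.H) (constraintBits 𝒞.V)) v := by
  obtain ⟨ρ, hρ⟩ := h
  exact ⟨_, modelRel_isTrans hN, (modelCell_isTiledGrid hρ hN ht).sat_tiling⟩

variable (𝒞 : TileSys)

theorem satisfiable_tiling_iff :
    Satisfiable (.tiling 𝒞.n (constraintBits 𝒞.H) (constraintBits 𝒞.V)) ↔ 𝒞.TilesZ := by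
  constructor
  · rintro ⟨A, _, M, hT, h⟩
    have (k : Fin 2) : IsTrans A (M.T k) := ⟨fun _ _ _ h h' => hT k h h'⟩
    exact (sat_tiling.mp h).tilesZ
  · intro h
    obtain ⟨M, hT, hM⟩ := TileSys.TilesTorus.exists_model (t := 0) h (dvd_zero 8) dvd_rfl
    exact ⟨_, ⟨0⟩, M, fun k _ _ _ => (hT k).trans _ _ _, hM _⟩

theorem finitelySatisfiable_tiling_iff :
    FinitelySatisfiable (.tiling 𝒞.n (constraintBits 𝒞.H) (constraintBits 𝒞.V)) ↔
      ∃ t : ℕ, 1 ≤ t ∧ 𝒞.TilesTorus t := by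
  constructor
  · rintro ⟨A, _, _, M, hT, h⟩
    have (k : Fin 2) : IsTrans A (M.T k) := ⟨fun _ _ _ h h' => hT k h h'⟩
    exact (sat_tiling.mp h).exists_tilesTorus
  · rintro ⟨t, ht, h⟩
    have : NeZero (8 * t) := ⟨by omega⟩
    obtain ⟨M, hT, hM⟩ := h.exists_model (dvd_mul_right 8 t) (dvd_mul_left t 8)
    exact ⟨_, ⟨0⟩, inferInstance, M, fun k _ _ _ => (hT k).trans _ _ _, hM _⟩

end Satisfiability

/-! ### Computability of the reduction -/

section Computability

theorem encode_conj_map {β : Type*} {m : ℕ} (h : m ≤ 2) (l : List β) (φ : β → F m) :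
    encode (.conj h (l.map φ)) =
      l.foldr (fun b s => Nat.pair 5 (Nat.pair (encode (φ b)) s)) (encode (.top h)) := by
  induction l with
  | nil => rfl
  | cons b l ih => exact congrArg (fun s => Nat.pair 5 (Nat.pair (encode (φ b)) s)) ih

theorem primrec_tilePred : Primrec tilePred :=
  Primrec₂.natPair.comp (.const 1) .id

theorem primrecRel_testBit : PrimrecRel fun a i : ℕ => a.testBit i = true := by
  have hpow : Primrec fun x : ℕ × ℕ => 2 ^ x.2 :=
    (Primrec₂.unpaired'.1 Nat.Primrec.pow).comp (.const 2) Primrec.snd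
  refine (Primrec.eq.comp (Primrec.nat_mod.comp (Primrec.nat_div.comp Primrec.fst hpow) (.const 2))
    (.const 1)).of_eq fun x => ?_
  simp [Nat.testBit_eq_decide_div_mod_eq]

variable {α β : Type*} [Primcodable α] [Primcodable β] {m : ℕ}

/-- The code of the formula `φ a` is a primitive recursive function of `a`. -/
def PrimrecFormula (φ : α → F m) : Prop :=
  Primrec fun a => encode (φ a)

namespace PrimrecFormula

theorem const (φ : F m) : PrimrecFormula fun _ : α => φ :=
  Primrec.const _

theorem patom {p : α → ℕ} (hp : Primrec p) {h₁ : 1 ≤ m} {h₂ : m ≤ 2} :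
    PrimrecFormula fun a => .patom (p a) h₁ h₂ :=
  Primrec₂.natPair.comp (.const 0) hp

theorem not {φ : α → F m} (hφ : PrimrecFormula φ) : PrimrecFormula fun a => (φ a).not :=
  Primrec₂.natPair.comp (.const 4) hφ

theorem and {φ ψ : α → F m} (hφ : PrimrecFormula φ) (hψ : PrimrecFormula ψ) :
    PrimrecFormula fun a => (φ a).and (ψ a) :=
  Primrec₂.natPair.comp (.const 5) (Primrec₂.natPair.comp hφ hψ)

theorem imp {φ ψ : α → F m} (hφ : PrimrecFormula φ) (hψ : PrimrecFormula ψ) :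
    PrimrecFormula fun a => (φ a).imp (ψ a) :=
  Primrec₂.natPair.comp (.const 7) (Primrec₂.natPair.comp hφ hψ)

theorem all {φ : α → F (m + 1)} (hφ : PrimrecFormula φ) {h : m ≤ 1} :
    PrimrecFormula fun a => .all h (φ a) :=
  Primrec₂.natPair.comp (.const 9) hφ

theorem ite {c : α → Prop} [DecidablePred c] (hc : PrimrecPred c) {φ ψ : α → F m}
    (hφ : PrimrecFormula φ) (hψ : PrimrecFormula ψ) :
    PrimrecFormula fun a => if c a then φ a else ψ a :=
  (Primrec.ite hc hφ hψ).of_eq fun a => (apply_ite encode (c a) (φ a) (ψ a)).symm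

theorem conj_map {L : α → List β} (hL : Primrec L) {φ : α → β → F m}
    (hφ : PrimrecFormula fun x : α × β => φ x.1 x.2) {h : m ≤ 2} :
    PrimrecFormula fun a => .conj h ((L a).map (φ a)) := by
  have hstep : Primrec₂ fun (a : α) (x : β × ℕ) =>
      Nat.pair 5 (Nat.pair (encode (φ a x.1)) x.2) :=
    Primrec₂.natPair.comp (.const 5) (Primrec₂.natPair.comp
      (hφ.comp (Primrec.fst.pair (Primrec.fst.comp Primrec.snd)))
      (Primrec.snd.comp Primrec.snd))
  exact (Primrec.list_foldr hL (.const (encode (.top h))) hstep).of_eq fun a =>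
    (encode_conj_map h (L a) (φ a)).symm

theorem conj_map_const {ι : Type*} (L : List ι) {φ : α → ι → F m}
    (hφ : ∀ i, PrimrecFormula fun a => φ a i) {h : m ≤ 2} :
    PrimrecFormula fun a => .conj h (L.map (φ a)) := by
  induction L with
  | nil => exact const _
  | cons i L ih => exact (hφ i).and ih

theorem forallCell {φ : α → Cell → F 0} (hφ : ∀ w, PrimrecFormula fun a => φ a w) :
    PrimrecFormula fun a => .forallCell (φ a) :=
  conj_map_const _ hφ

theorem forbid (k : Fin 2) (p q : ℕ) {c c' : α → ℕ} (hc : Primrec c) (hc' : Primrec c') :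
    PrimrecFormula fun a => .forbid k p q (c a) (c' a) :=
  (((const _).and (patom hc)).imp ((const _).imp ((const _).imp (patom hc').not)).all).all

theorem cover {n : α → ℕ} (hn : Primrec n) : PrimrecFormula fun a => .cover (n a) :=
  (conj_map (Primrec.list_range.comp hn) (patom (primrec_tilePred.comp Primrec.snd)).not).not.all

theorem constraint {n a : α → ℕ} (hn : Primrec n) (ha : Primrec a) (k : Fin 2) (p q : ℕ) :
    PrimrecFormula fun x => .constraint (n x) (a x) k p q :=
  conj_map (Primrec.list_range.comp (Primrec.nat_mul.comp hn hn))
    (ite (primrecRel_testBit.comp (ha.comp Primrec.fst) Primrec.snd) (const _) (forbid k p q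
      (primrec_tilePred.comp (Primrec.nat_div.comp Primrec.snd (hn.comp Primrec.fst)))
      (primrec_tilePred.comp (Primrec.nat_mod.comp Primrec.snd (hn.comp Primrec.fst)))))

theorem tiling {n a b : α → ℕ} (hn : Primrec n) (ha : Primrec a) (hb : Primrec b) :
    PrimrecFormula fun x => .tiling (n x) (a x) (b x) :=
  (const _).and ((cover hn).and ((forallCell fun _ => constraint hn ha _ _ _).and
    (forallCell fun _ => constraint hn hb _ _ _)))

end PrimrecFormula

end Computability

/-- the reduction in the proof of Theorem 8.  There is a computable
map assigning to each tiling system `𝒞` a sentence `η_𝒞` of FL² with equality and two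
distinguished transitive relations such that `η_𝒞` is satisfiable (with both
distinguished relations transitive) iff `𝒞` tiles `ℤ × ℤ`, and `η_𝒞` is finitely
satisfiable iff `𝒞` tiles a torus `ℤ_t × ℤ_t` for some `t ≥ 1`. -/
theorem tiling_reduction_to_flutedTwoTransEq :
    ∃ g : ℕ → ℕ, Computable g ∧
      ∀ T : TileSys, ∃ η : F 0,
        g T.encode = encode η ∧
        (Satisfiable η ↔ T.TilesZ) ∧
        (FinitelySatisfiable η ↔ ∃ t : ℕ, 1 ≤ t ∧ T.TilesTorus t) := by
  refine ⟨fun N => encode (.tiling N.unpair.1 N.unpair.2.unpair.1 N.unpair.2.unpair.2),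
    Primrec.to_comp ?_, fun T => ⟨.tiling T.n (constraintBits T.H) (constraintBits T.V), ?_,
      satisfiable_tiling_iff T, finitelySatisfiable_tiling_iff T⟩⟩
  · have snd : Primrec fun N : ℕ => N.unpair.2 := Primrec.snd.comp Primrec.unpair
    have fst : Primrec fun N : ℕ => N.unpair.1 := Primrec.fst.comp Primrec.unpair
    exact PrimrecFormula.tiling fst (fst.comp snd) (snd.comp snd)
  · have henc : T.encode = Nat.pair T.n (Nat.pair (constraintBits T.H) (constraintBits T.V)) := rfl
    simp only [henc, Nat.unpair_pair]

end FlutedTwoTransEq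
end
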